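/- arXiv:2002.05156 — 7 statements merged into one kernel-verified Lean document; each statement's English description precedes it below -/
import Mathlib

section
/- Let n_row, n_col, k be positive integers, let ε > 0 be real, let A be a matrix with entries A_{i,j} ∈ [−1,1] for i ∈ [n_row], j ∈ [n_col], and let x* ∈ Δ_{n_col}. If n_row · exp(−k·ε²/2) < 1, then there exists a k-uniform probability vector x̃ ∈ Δ_{n_col} such that (A x̃)_i > (A x*)_i − ε for every i ∈ [n_row]; in particular, |{i ∈ [n_row] : (A x̃)_i ≥ −ε}| ≥ |{i ∈ [n_row] : (A x*)_i ≥ 0}|. -/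
open Finset

/-!
Draw `k` columns independently from the distribution `x*` and let `x̃` be their empirical
distribution. Then `(A x̃)_i` is the average of `k` independent samples of the `i`-th row, each in
`[-1, 1]` with mean `(A x*)_i`, so by Hoeffding's inequality it falls short of its mean by `ε` or
more with probability at most `exp (-k ε² / 2)`. As `n_row · exp (-k ε² / 2) < 1`, the union bound
leaves a sample for which no row falls short.
-/

section Sampling

open MeasureTheory ProbabilityTheory
open scoped NNReal

variable {Ω σ κ : Type*} [MeasurableSpace Ω] {μ : Measure Ω} [IsProbabilityMeasure μ]
  [Fintype σ] [Fintype κ] {ε : ℝ}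

theorem exists_forall_notMem_of_sum_measureReal_lt_one {B : κ → Set Ω}
    (hB : ∑ i, μ.real (B i) < 1) : ∃ ω, ∀ i, ω ∉ B i := by
  by_contra! hcover
  refine hB.not_ge ?_
  calc 1 = μ.real (⋃ i, B i) := by
        rw [Set.iUnion_eq_univ_iff.2 hcover, probReal_univ]
    _ ≤ ∑ i, μ.real (B i) := measureReal_iUnion_fintype_le B

theorem measureReal_pi_card_mul_le_sum_le_exp {X : Ω → ℝ} {c : ℝ≥0} (hX : HasSubgaussianMGF X c μ)
    (hε : 0 ≤ ε) :
    (Measure.pi fun _ : σ => μ).real {s | Fintype.card σ * ε ≤ ∑ l, X (s l)} ≤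
      Real.exp (-(Fintype.card σ * ε ^ 2) / (2 * c)) := by
  have hindep : iIndepFun (fun (l : σ) (s : σ → Ω) => X (s l)) (Measure.pi fun _ => μ) :=
    iIndepFun_pi fun _ => hX.aemeasurable
  have hsub (l : σ) :
      HasSubgaussianMGF (fun s : σ → Ω => X (s l)) c (Measure.pi fun _ => μ) :=
    .of_map (measurable_pi_apply l).aemeasurable (by rwa [(measurePreserving_eval _ l).map_eq])
  refine (HasSubgaussianMGF.measure_sum_ge_le_of_iIndepFun hindep (s := univ)
    (fun l _ => hsub l) (by positivity)).trans_eq ?_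
  rw [sum_const, card_univ, nsmul_eq_mul]
  rcases isEmpty_or_nonempty σ with _ | _
  · simp
  · congr 1
    push_cast
    field_simp

theorem exists_forall_integral_sub_lt_average [Nonempty σ] {X : κ → Ω → ℝ} {a b : ℝ}
    (hm : ∀ i, AEMeasurable (X i) μ) (hX : ∀ i, ∀ᵐ ω ∂μ, X i ω ∈ Set.Icc a b) (hε : 0 ≤ ε)
    (hsmall : Fintype.card κ * Real.exp (-(2 * Fintype.card σ * ε ^ 2) / (b - a) ^ 2) < 1) :
    ∃ s : σ → Ω, ∀ i, ∫ ω, X i ω ∂μ - ε < (∑ l, X i (s l)) / Fintype.card σ := by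
  let deficit (i : κ) (ω : Ω) : ℝ := ∫ ω', X i ω' ∂μ - X i ω
  have hsub (i : κ) : HasSubgaussianMGF (deficit i) ((‖b - a‖₊ / 2) ^ 2) μ := by
    convert (hasSubgaussianMGF_of_mem_Icc (hm i) (hX i)).neg using 1
    ext ω
    simp [deficit]
  have hexponent : -(Fintype.card σ * ε ^ 2) / (2 * ((‖b - a‖₊ / 2) ^ 2 : ℝ≥0)) =
      -(2 * Fintype.card σ * ε ^ 2) / (b - a) ^ 2 := by
    push_cast
    rw [div_pow, Real.norm_eq_abs, sq_abs]
    field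
  have hunion : ∑ i, (Measure.pi fun _ : σ => μ).real
      {s | Fintype.card σ * ε ≤ ∑ l, deficit i (s l)} < 1 := by
    refine (sum_le_sum fun i _ => measureReal_pi_card_mul_le_sum_le_exp (hsub i) hε).trans_lt ?_
    rwa [sum_const, card_univ, nsmul_eq_mul, hexponent]
  obtain ⟨s, hs⟩ := exists_forall_notMem_of_sum_measureReal_lt_one hunion
  refine ⟨s, fun i => ?_⟩
  have hi : ∑ l, deficit i (s l) < Fintype.card σ * ε := not_le.1 (hs i)
  rw [sum_sub_distrib, sum_const, card_univ, nsmul_eq_mul] at hi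
  rw [lt_div_iff₀ (by positivity)]
  linarith

end Sampling

section EmpiricalDistribution

variable {σ ι : Type*} [Fintype σ]

open Classical in
/-- The empirical distribution of a finite sample `s`: the weight of `j` is the proportion of
indices `l` with `s l = j`. These are the `k`-uniform vectors, for `k` the size of the sample. -/
noncomputable def empiricalDistribution (s : σ → ι) (j : ι) : ℝ :=
  (#{l | s l = j} : ℝ) / Fintype.card σ

theorem empiricalDistribution_nonneg (s : σ → ι) (j : ι) : 0 ≤ empiricalDistribution s j := by
  unfold empiricalDistribution
  positivity

theorem hasSum_mul_empiricalDistribution (s : σ → ι) (g : ι → ℝ) :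
    HasSum (fun j => g j * empiricalDistribution s j) ((∑ l, g (s l)) / Fintype.card σ) := by
  classical
  have hpoint (l : σ) : HasSum (fun j => if j = s l then g j else 0) (g (s l)) := by
    simpa using hasSum_single (f := fun j => if j = s l then g j else 0) (s l)
      fun j hj => if_neg hj
  refine ((hasSum_sum fun l (_ : l ∈ univ) => hpoint l).div_const _).congr_fun fun j => ?_
  simp only [empiricalDistribution, ← sum_filter, sum_const, nsmul_eq_mul, eq_comm (a := j)]
  ring

theorem hasSum_empiricalDistribution [Nonempty σ] (s : σ → ι) :
    HasSum (empiricalDistribution s) 1 := by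
  simpa using hasSum_mul_empiricalDistribution s 1

end EmpiricalDistribution

theorem exists_pmf_toReal_eq {ι : Type*} {x : ι → ℝ} (hx0 : ∀ j, 0 ≤ x j) (hx1 : HasSum x 1) :
    ∃ p : PMF ι, ∀ j, (p j).toReal = x j :=
  ⟨⟨fun j => ENNReal.ofReal (x j), ENNReal.hasSum_coe.2 (by simpa using hx1.toNNReal hx0)⟩,
    fun j => ENNReal.toReal_ofReal (hx0 j)⟩

theorem exists_forall_tsum_mul_sub_lt_average {ι κ σ : Type*} [Fintype κ] [Fintype σ] [Nonempty σ]
    {a b ε : ℝ} (hε : 0 ≤ ε) {A : κ → ι → ℝ} (hA : ∀ i j, A i j ∈ Set.Icc a b)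
    {x : ι → ℝ} (hx0 : ∀ j, 0 ≤ x j) (hx1 : HasSum x 1)
    (hsmall : Fintype.card κ * Real.exp (-(2 * Fintype.card σ * ε ^ 2) / (b - a) ^ 2) < 1) :
    ∃ s : σ → ι, ∀ i, ∑' j, A i j * x j - ε < (∑ l, A i (s l)) / Fintype.card σ := by
  let _ : MeasurableSpace ι := ⊤
  obtain ⟨p, hp⟩ := exists_pmf_toReal_eq hx0 hx1
  have hmeas (i : κ) : AEMeasurable (A i) p.toMeasure := measurable_from_top.aemeasurable
  have hbound (i : κ) : ∀ᵐ j ∂p.toMeasure, A i j ∈ Set.Icc a b := .of_forall (hA i)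
  have hmean (i : κ) : ∫ j, A i j ∂p.toMeasure = ∑' j, A i j * x j := by
    rw [p.integral_eq_tsum _ (.of_mem_Icc a b (hmeas i) (hbound i))]
    simp only [hp, smul_eq_mul, mul_comm]
  simpa only [hmean] using exists_forall_integral_sub_lt_average hmeas hbound hε hsmall

theorem kUniform_approximation_general {ι κ : Type*} [Fintype κ] {k : ℕ} (hk : k ≠ 0)
    {a b ε : ℝ} (hε : 0 ≤ ε) {A : κ → ι → ℝ} (hA : ∀ i j, A i j ∈ Set.Icc a b)
    {x : ι → ℝ} (hx0 : ∀ j, 0 ≤ x j) (hx1 : HasSum x 1)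
    (hsmall : Fintype.card κ * Real.exp (-(2 * k * ε ^ 2) / (b - a) ^ 2) < 1) :
    ∃ y : ι → ℝ, (∀ j, 0 ≤ y j) ∧ HasSum y 1 ∧ (∀ j, ∃ m : ℕ, y j = m / k) ∧
      (∀ i, ∑' j, A i j * y j > ∑' j, A i j * x j - ε) ∧
      #{i | 0 ≤ ∑' j, A i j * x j} ≤ #{i | -ε ≤ ∑' j, A i j * y j} := by
  have : NeZero k := ⟨hk⟩
  obtain ⟨s, hs⟩ := exists_forall_tsum_mul_sub_lt_average (σ := Fin k) hε hA hx0 hx1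
    (by rwa [Fintype.card_fin])
  have hclose (i : κ) :
      ∑' j, A i j * x j - ε < ∑' j, A i j * empiricalDistribution s j := by
    rw [(hasSum_mul_empiricalDistribution s (A i)).tsum_eq]
    exact hs i
  refine ⟨empiricalDistribution s, empiricalDistribution_nonneg s, hasSum_empiricalDistribution s,
    fun j => ⟨_, by rw [empiricalDistribution, Fintype.card_fin]⟩, hclose,
    card_le_card (monotone_filter_right univ fun i _ hi => ?_)⟩
  linarith [hclose i]

/-- core of Theorem 4, `th:mssi_upper`.
Any probability vector `xs` on the simplex can be replaced by a `k`-uniform probability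
vector `xt` (each coordinate an integer multiple of `1/k`) while decreasing each
coordinate of `A x` by less than `ε`, provided `n_row · exp(−k ε²/2) < 1`.
In particular, the number of rows with `(A xt)_i ≥ −ε` is at least the number of rows
with `(A xs)_i ≥ 0`. -/
theorem kUniform_approximation
    (n_row n_col k : ℕ) (hrow : 0 < n_row) (hcol : 0 < n_col) (hk : 0 < k)
    (ε : ℝ) (hε : 0 < ε)
    (A : Fin n_row → Fin n_col → ℝ)
    (hA : ∀ i j, A i j ∈ Set.Icc (-1 : ℝ) 1)
    (xs : Fin n_col → ℝ) (hxs0 : ∀ j, 0 ≤ xs j) (hxs1 : ∑ j, xs j = 1)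
    (hsmall : (n_row : ℝ) * Real.exp (-(k : ℝ) * ε ^ 2 / 2) < 1) :
    ∃ xt : Fin n_col → ℝ,
      (∀ j, 0 ≤ xt j) ∧ (∑ j, xt j = 1) ∧
      (∀ j, ∃ m : ℕ, xt j = (m : ℝ) / k) ∧
      (∀ i, ∑ j, A i j * xt j > (∑ j, A i j * xs j) - ε) ∧
      (Finset.univ.filter fun i : Fin n_row => 0 ≤ ∑ j, A i j * xs j).card ≤
        (Finset.univ.filter fun i : Fin n_row => -ε ≤ ∑ j, A i j * xt j).card := by
  obtain ⟨y, hy0, hy1, hy⟩ := kUniform_approximation_general hk.ne' hε.le hA hxs0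
    (hxs1 ▸ hasSum_fintype xs) (by rw [Fintype.card_fin]; convert hsmall using 3; ring)
  exact ⟨y, hy0, (hasSum_fintype y).unique hy1, by simpa only [tsum_fintype] using hy⟩
end

section
/- Let n be a positive even integer, let v ∈ Δ_n be a probability vector, and let c > 0. If Σ_{i=1}^n |v_i − 1/n| > c, then there exists a subset I ⊆ [n] with |I| = n/2 such that Σ_{i∈I} v_i > 1/2 + c/4. -/
open Finset

/-!
Let `I` consist of the `n / 2` largest values, so that `I` and its complement are separated by a
median `t`. The `ℓ₁` distance to the constant `t` is exactly the sum over `I` minus the sum over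
its complement. Replacing `t` by the mean at most doubles this distance, because the mean is itself
within the average distance of `t`.
-/

lemma exists_subset_card_eq_threshold {ι α : Type*} [LinearOrder α] [Nonempty α] (f : ι → α)
    {s : Finset ι} {m : ℕ} (hm : m ≤ #s) :
    ∃ I ⊆ s, #I = m ∧ ∃ t, (∀ i ∈ I, t ≤ f i) ∧ ∀ i ∈ s, i ∉ I → f i ≤ t := by
  classical
  induction m with
  | zero =>
    obtain ⟨t, ht⟩ := (s.image f).exists_le
    exact ⟨∅, empty_subset s, card_empty, t, by simp, fun i hi _ => ht _ (mem_image_of_mem f hi)⟩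
  | succ m ih =>
    obtain ⟨I, hIs, hIcard, t, hge, hle⟩ := ih (by lia)
    have hrest : (s \ I).Nonempty := by
      rw [← card_pos, card_sdiff_of_subset hIs]
      lia
    obtain ⟨k, hk, hmax⟩ := (s \ I).exists_max_image f hrest
    obtain ⟨hks, hkI⟩ := mem_sdiff.1 hk
    refine ⟨insert k I, insert_subset hks hIs, by rw [card_insert_of_notMem hkI, hIcard],
      f k, ?_, ?_⟩
    · exact (forall_mem_insert ..).2 ⟨le_rfl, fun i hi => (hle k hks hkI).trans (hge i hi)⟩
    · exact fun i hi hiI => hmax i (mem_sdiff.2 ⟨hi, fun h => hiI (mem_insert_of_mem h)⟩)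

lemma sum_abs_sub_eq_of_threshold {ι G : Type*} [AddCommGroup G] [LinearOrder G]
    [IsOrderedAddMonoid G] {f : ι → G} {s I : Finset ι} {t : G} (hIs : I ⊆ s) (hcard : 2 * #I = #s)
    (hge : ∀ i ∈ I, t ≤ f i) (hle : ∀ i ∈ s, i ∉ I → f i ≤ t) :
    ∑ i ∈ s, |f i - t| = 2 • ∑ i ∈ I, f i - ∑ i ∈ s, f i := by
  classical
  have hupper : ∑ i ∈ I, |f i - t| = ∑ i ∈ I, (f i - t) :=
    sum_congr rfl fun i hi => abs_of_nonneg (sub_nonneg.2 (hge i hi))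
  have hlower : ∑ i ∈ s \ I, |f i - t| = -∑ i ∈ s \ I, (f i - t) := by
    rw [← sum_neg_distrib]
    refine sum_congr rfl fun i hi => abs_of_nonpos (sub_nonpos.2 ?_)
    exact hle i (mem_sdiff.1 hi).1 (mem_sdiff.1 hi).2
  calc ∑ i ∈ s, |f i - t|
      = ∑ i ∈ I, (f i - t) - ∑ i ∈ s \ I, (f i - t) := by
        rw [← sum_sdiff hIs, hupper, hlower, neg_add_eq_sub]
    _ = 2 • ∑ i ∈ I, (f i - t) - ∑ i ∈ s, (f i - t) := by
        rw [← sum_sdiff hIs]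
        abel
    _ = 2 • ∑ i ∈ I, f i - ∑ i ∈ s, f i := by
        simp only [sum_sub_distrib, sum_const, smul_sub, ← mul_smul, hcard]
        abel

section Field

variable {ι K : Type*} [Field K] [LinearOrder K] [IsStrictOrderedRing K]

lemma card_mul_abs_mean_sub_le (s : Finset ι) (f : ι → K) (t : K) :
    #s * |(∑ i ∈ s, f i) / #s - t| ≤ ∑ i ∈ s, |f i - t| := by
  rcases s.eq_empty_or_nonempty with rfl | hs
  · simp
  have hcard : (#s : K) ≠ 0 := Nat.cast_ne_zero.2 hs.card_ne_zero
  calc #s * |(∑ i ∈ s, f i) / #s - t|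
      = |#s * ((∑ i ∈ s, f i) / #s - t)| := by
        rw [abs_mul, Nat.abs_cast]
    _ = |∑ i ∈ s, (f i - t)| := by
        rw [mul_sub, mul_div_cancel₀ _ hcard, sum_sub_distrib, sum_const, nsmul_eq_mul]
    _ ≤ ∑ i ∈ s, |f i - t| := abs_sum_le_sum_abs ..

lemma sum_abs_sub_mean_le_two_mul (s : Finset ι) (f : ι → K) (t : K) :
    ∑ i ∈ s, |f i - (∑ j ∈ s, f j) / #s| ≤ 2 * ∑ i ∈ s, |f i - t| := by
  set μ := (∑ j ∈ s, f j) / #s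
  calc ∑ i ∈ s, |f i - μ|
      ≤ ∑ i ∈ s, (|f i - t| + |μ - t|) :=
        sum_le_sum fun i _ => by
          rw [abs_sub_comm μ t]
          exact abs_sub_le (f i) t μ
    _ = ∑ i ∈ s, |f i - t| + #s * |μ - t| := by
        rw [sum_add_distrib, sum_const, nsmul_eq_mul]
    _ ≤ 2 * ∑ i ∈ s, |f i - t| := by
        rw [two_mul]
        gcongr
        exact card_mul_abs_mean_sub_le s f t

theorem deviation_from_uniform_general {s : Finset ι} (hs : Even #s) (f : ι → K) {c : K}
    (hfar : c < ∑ i ∈ s, |f i - (∑ j ∈ s, f j) / #s|) :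
    ∃ I ⊆ s, 2 * #I = #s ∧ (∑ i ∈ s, f i) / 2 + c / 4 < ∑ i ∈ I, f i := by
  obtain ⟨m, hm⟩ := hs.two_dvd
  obtain ⟨I, hIs, hIcard, t, hge, hle⟩ := exists_subset_card_eq_threshold f (by lia : m ≤ #s)
  have hcard : 2 * #I = #s := by rw [hIcard, hm]
  have hmedian := sum_abs_sub_eq_of_threshold hIs hcard hge hle
  rw [two_nsmul] at hmedian
  have hmean := sum_abs_sub_mean_le_two_mul s f t
  exact ⟨I, hIs, hcard, by linarith⟩

end Field

/-- Lemma 6, `lemma:deviation_from_uniform`.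
A probability vector on `[n]` (with `n` even) that is more than `c`-far in `ℓ₁`
norm from the uniform vector must put mass more than `1/2 + c/4` on some half of
the coordinates. -/
theorem deviation_from_uniform
    (n : ℕ) (hn : 0 < n) (hne : Even n)
    (v : Fin n → ℝ) (hv0 : ∀ i, 0 ≤ v i) (hv1 : ∑ i, v i = 1)
    (c : ℝ) (hc : 0 < c)
    (hfar : ∑ i, |v i - 1 / (n : ℝ)| > c) :
    ∃ I : Finset (Fin n), 2 * I.card = n ∧ (∑ i ∈ I, v i) > 1 / 2 + c / 4 := by
  simpa [hv1] using deviation_from_uniform_general (s := univ) (c := c) (by simpa using hne) v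
    (by simpa [hv1] using hfar)
end

section
/- Let m be a positive even integer, let ε be a real number with 0 < ε ≤ 1/8, and let x : [m] → ℝ_{≥0} be nonnegative weights whose total mass s := Σ_{j=1}^m x_j satisfies 1/2 − ε ≤ s ≤ 1/2 + ε. If Σ_{j=1}^m |x_j/s − 1/m| > 16ε, then there exists a subset T ⊆ [m] with |T| = m/2 such that Σ_{j∉T} x_j − Σ_{j∈T} x_j < −ε. -/
open Finset

/-!
Let `T` consist of the `m / 2` largest weights and let `t` be a median. As `T` and `Tᶜ` have the
same size, the difference of their masses is exactly the `ℓ₁` distance from `x` to the constant `t`.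
This is at least half the `ℓ₁` distance from `x` to its mean `s / m`, which is `|s|` times the
distance from the normalized weights to the uniform distribution. Hence the difference of the masses
exceeds `|s| * (16 * ε) / 2`, which is `ε` already for `|s| = 1 / 8`.
-/

section Threshold

variable {ι α : Type*} [Fintype ι] [DecidableEq ι]

lemma exists_card_eq_forall_le_forall_compl_le [LinearOrder α] [Nonempty α] (x : ι → α) {k : ℕ}
    (hk : k ≤ Fintype.card ι) :
    ∃ (T : Finset ι) (t : α), #T = k ∧ (∀ j ∈ T, t ≤ x j) ∧ ∀ j ∈ Tᶜ, x j ≤ t := by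
  induction k with
  | zero =>
    obtain ⟨t, ht⟩ := Finite.exists_le x
    exact ⟨∅, t, card_empty, by simp, fun j _ => ht j⟩
  | succ k ih =>
    obtain ⟨T, t, hcard, hT, hTc⟩ := ih (by lia)
    have hne : Tᶜ.Nonempty := by
      rw [← card_pos, card_compl]
      lia
    obtain ⟨i, hi, hmax⟩ := exists_max_image Tᶜ x hne
    refine ⟨insert i T, x i, ?_, ?_, ?_⟩
    · rw [card_insert_of_notMem (mem_compl.1 hi), hcard]
    · exact forall_mem_insert _ _ _ |>.2 ⟨le_rfl, fun j hj => (hTc i hi).trans (hT j hj)⟩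
    · exact fun j hj => hmax j (compl_subset_compl.2 (subset_insert i T) hj)

lemma sum_abs_sub_eq_sum_sub_sum_compl [AddCommGroup α] [LinearOrder α] [IsOrderedAddMonoid α]
    {x : ι → α} {T : Finset ι} {t : α} (hcard : #Tᶜ = #T)
    (hT : ∀ j ∈ T, t ≤ x j) (hTc : ∀ j ∈ Tᶜ, x j ≤ t) :
    ∑ j, |x j - t| = ∑ j ∈ T, x j - ∑ j ∈ Tᶜ, x j := by
  calc ∑ j, |x j - t| = ∑ j ∈ T, |x j - t| + ∑ j ∈ Tᶜ, |x j - t| := (sum_add_sum_compl T _).symm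
    _ = ∑ j ∈ T, (x j - t) + ∑ j ∈ Tᶜ, (t - x j) := by
      congr 1
      · exact sum_congr rfl fun j hj => abs_of_nonneg (sub_nonneg.2 (hT j hj))
      · refine sum_congr rfl fun j hj => ?_
        rw [abs_sub_comm, abs_of_nonneg (sub_nonneg.2 (hTc j hj))]
    _ = ∑ j ∈ T, x j - ∑ j ∈ Tᶜ, x j := by
      simp only [sum_sub_distrib, sum_const, hcard]
      abel

end Threshold

section Mean

variable {ι K : Type*} [Fintype ι] [Field K] [LinearOrder K] [IsStrictOrderedRing K]

lemma sum_abs_sub_mean_le (x : ι → K) (t : K) :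
    ∑ j, |x j - (∑ i, x i) / Fintype.card ι| ≤ 2 * ∑ j, |x j - t| := by
  cases isEmpty_or_nonempty ι
  · simp
  set μ := (∑ i, x i) / Fintype.card ι with hμ
  have hsum : Fintype.card ι * (μ - t) = ∑ j, (x j - t) := by
    rw [mul_sub, hμ, mul_div_cancel₀ _ (Nat.cast_ne_zero.2 Fintype.card_ne_zero)]
    simp only [sum_sub_distrib, sum_const, card_univ, nsmul_eq_mul]
  have hmean : Fintype.card ι * |μ - t| ≤ ∑ j, |x j - t| := by
    calc Fintype.card ι * |μ - t| = |∑ j, (x j - t)| := by rw [← hsum, abs_mul, Nat.abs_cast]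
      _ ≤ ∑ j, |x j - t| := abs_sum_le_sum_abs _ _
  calc ∑ j, |x j - μ| ≤ ∑ j, (|x j - t| + |μ - t|) :=
        sum_le_sum fun j _ => abs_sub_comm t μ ▸ abs_sub_le (x j) t μ
    _ = ∑ j, |x j - t| + Fintype.card ι * |μ - t| := by
        simp only [sum_add_distrib, sum_const, card_univ, nsmul_eq_mul]
    _ ≤ 2 * ∑ j, |x j - t| := by linarith

lemma exists_half_sum_abs_sub_mean_le [DecidableEq ι] (hι : Even (Fintype.card ι)) (x : ι → K) :
    ∃ T : Finset ι, 2 * #T = Fintype.card ι ∧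
      ∑ j, |x j - (∑ i, x i) / Fintype.card ι| ≤ 2 * (∑ j ∈ T, x j - ∑ j ∈ Tᶜ, x j) := by
  obtain ⟨k, hk⟩ := hι
  obtain ⟨T, t, hcard, hT, hTc⟩ := exists_card_eq_forall_le_forall_compl_le x (k := k) (by lia)
  have hcompl : #Tᶜ = #T := by
    rw [card_compl]
    lia
  refine ⟨T, by lia, ?_⟩
  rw [← sum_abs_sub_eq_sum_sub_sum_compl hcompl hT hTc]
  exact sum_abs_sub_mean_le x t

lemma abs_mul_sum_abs_div_sub {s : K} (hs : s ≠ 0) (x : ι → K) (c : K) :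
    |s| * ∑ j, |x j / s - c| = ∑ j, |x j - s * c| := by
  simp only [mul_sum, ← abs_mul, mul_sub, mul_div_cancel₀ _ hs]

theorem almost_uniform_general [DecidableEq ι] (hι : Even (Fintype.card ι)) {ε s : K} {x : ι → K}
    (hs : s = ∑ j, x j) (hs_large : 1 / 8 ≤ |s|)
    (hfar : 16 * ε < ∑ j, |x j / s - 1 / (Fintype.card ι : K)|) :
    ∃ T : Finset ι, 2 * #T = Fintype.card ι ∧ ∑ j ∈ Tᶜ, x j - ∑ j ∈ T, x j < -ε := by
  obtain ⟨T, hcard, hT⟩ := exists_half_sum_abs_sub_mean_le hι x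
  refine ⟨T, hcard, ?_⟩
  have hs_ne : s ≠ 0 := abs_pos.1 (by linarith)
  set d := ∑ j, |x j / s - 1 / (Fintype.card ι : K)| with hd
  have hd_nonneg : 0 ≤ d := sum_nonneg fun _ _ => abs_nonneg _
  have hscale : |s| * d ≤ 2 * (∑ j ∈ T, x j - ∑ j ∈ Tᶜ, x j) := by
    rwa [hd, abs_mul_sum_abs_div_sub hs_ne, mul_one_div, hs]
  have hmass : 1 / 8 * d ≤ |s| * d := mul_le_mul_of_nonneg_right hs_large hd_nonneg
  linarith

end Mean

/-- Lemma 7, `lemma:almost_uniform_1`, abstract form.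
If nonnegative weights `x` on `[m]` (with `m` even) have total mass
`s ∈ [1/2 − ε, 1/2 + ε]` and the normalized weights deviate from the uniform
distribution by more than `16ε` in `ℓ₁` norm, then there is a subset `T` of
cardinality `m/2` such that `∑_{j∉T} x j − ∑_{j∈T} x j < −ε`. -/
theorem almost_uniform
    (m : ℕ) (hm : 0 < m) (hme : Even m)
    (ε : ℝ) (hε0 : 0 < ε) (hε8 : ε ≤ 1 / 8)
    (x : Fin m → ℝ) (hx : ∀ j, 0 ≤ x j)
    (s : ℝ) (hs : s = ∑ j, x j)
    (hs1 : 1 / 2 - ε ≤ s) (hs2 : s ≤ 1 / 2 + ε)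
    (hfar : ∑ j, |x j / s - 1 / (m : ℝ)| > 16 * ε) :
    ∃ T : Finset (Fin m), 2 * T.card = m ∧
      (∑ j ∈ Tᶜ, x j) - (∑ j ∈ T, x j) < -ε := by
  simpa only [Fintype.card_fin] using almost_uniform_general (by simpa only [Fintype.card_fin]) hs
    (le_abs.2 (.inl (by linarith))) (by simpa only [Fintype.card_fin] using hfar)
end

section
/- Let n be a positive integer and let x : [n] × {0,1} → ℝ_{≥0} satisfy x(j,0) + x(j,1) = 1/n for every j ∈ [n]. For a binary string c ∈ {0,1}^n define f(c) = Σ_{j=1}^n x(j, c_j). Then for all c', c'' ∈ {0,1}^n one has f(c') + f(c'') ≤ 2 − d_H(c', c'')/n, where d_H denotes Hamming distance. Consequently, if d_H(c', c'') ≥ n/5 and 0 < ε < 1/200, then it cannot hold that both f(c') ≥ 1 − 20ε and f(c'') ≥ 1 − 20ε. -/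
open Finset

/-! At a coordinate `j` where two strings differ, the two terms `x j (c j)` and `x j (c' j)` are
distinct entries of the same row and share its mass `w j`; where the strings coincide, each term is
at most `w j`. So each disagreement costs `w j` against the trivial bound `2 * ∑ j, w j` on the sum
of the two agreements. -/

section Agreement

variable {ι : Type*} [Fintype ι] {α : ι → Type*}

/-- The agreement of the string `c` with the fractional assignment `x`, where `x j a` is the mass
that `x` puts on the symbol `a` at coordinate `j`; the paper's `f(c)`. -/
def agreement {M : Type*} [AddCommMonoid M] (x : ∀ j, α j → M) (c : ∀ j, α j) : M :=
  ∑ j, x j (c j)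

theorem add_add_ite_ne_le_add_self {β M : Type*} [Fintype β] [DecidableEq β]
    [AddCommMonoid M] [PartialOrder M] [IsOrderedAddMonoid M] {p : β → M} {m : M}
    (hp : ∀ b, 0 ≤ p b) (hm : ∑ b, p b ≤ m) (a b : β) :
    p a + p b + (if a ≠ b then m else 0) ≤ m + m := by
  obtain rfl | hab := eq_or_ne a b
  · have ha : p a ≤ m := (single_le_sum (fun i _ => hp i) (mem_univ a)).trans hm
    simpa using add_le_add ha ha
  · have hpair : p a + p b ≤ m :=
      (add_le_sum (fun i _ => hp i) (mem_univ a) (mem_univ b) hab).trans hm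
    simpa [hab] using add_le_add_left hpair m

variable [∀ j, DecidableEq (α j)] [∀ j, Fintype (α j)]

theorem agreement_add_agreement_add_sum_ne_le {M : Type*}
    [AddCommMonoid M] [PartialOrder M] [IsOrderedAddMonoid M]
    {x : ∀ j, α j → M} {w : ι → M} (hx : ∀ j a, 0 ≤ x j a) (hw : ∀ j, ∑ a, x j a ≤ w j)
    (c c' : ∀ j, α j) :
    agreement x c + agreement x c' + ∑ j with c j ≠ c' j, w j ≤ ∑ j, w j + ∑ j, w j := by
  simp only [agreement, sum_filter, ← sum_add_distrib]
  exact sum_le_sum fun j _ => add_add_ite_ne_le_add_self (hx j) (hw j) (c j) (c' j)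

variable [Nonempty ι] {K : Type*} [Field K] [LinearOrder K] [IsStrictOrderedRing K]
  {x : ∀ j, α j → K}

theorem agreement_add_agreement_le (hx : ∀ j a, 0 ≤ x j a)
    (hsum : ∀ j, ∑ a, x j a ≤ 1 / (Fintype.card ι : K)) (c c' : ∀ j, α j) :
    agreement x c + agreement x c' ≤ 2 - (hammingDist c c' : K) / Fintype.card ι := by
  have htotal : ∑ _j : ι, 1 / (Fintype.card ι : K) = 1 := by simp
  have hdist : ∑ j with c j ≠ c' j, 1 / (Fintype.card ι : K)
      = (hammingDist c c' : K) / Fintype.card ι := by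
    simp [hammingDist, div_eq_mul_inv]
  have hle := agreement_add_agreement_add_sum_ne_le hx hsum c c'
  rw [htotal, hdist] at hle
  linarith

theorem at_most_one_codeword_general (hx : ∀ j a, 0 ≤ x j a)
    (hsum : ∀ j, ∑ a, x j a ≤ 1 / (Fintype.card ι : K)) :
    (∀ c c' : ∀ j, α j,
      agreement x c + agreement x c' ≤ 2 - (hammingDist c c' : K) / Fintype.card ι) ∧
    (∀ (c c' : ∀ j, α j) (δ η : K),
      δ * Fintype.card ι ≤ hammingDist c c' → 2 * η < δ →
      ¬(1 - η ≤ agreement x c ∧ 1 - η ≤ agreement x c')) := by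
  refine ⟨agreement_add_agreement_le hx hsum, ?_⟩
  rintro c c' δ η hδ hη ⟨hc, hc'⟩
  have hle := agreement_add_agreement_le hx hsum c c'
  have hrel : δ ≤ (hammingDist c c' : K) / Fintype.card ι :=
    (le_div_iff₀ (Nat.cast_pos.2 Fintype.card_pos)).2 hδ
  linarith

end Agreement

/-- combinatorial core of Lemma 10, `lemma:at_most_one_row`.
If `x` splits mass `1/n` between the two possible values of each bit `j`, and
`f c = ∑_j x j (c j)` measures the agreement of a binary string `c` with this
fractional assignment, then `f c' + f c'' ≤ 2 − d_H(c',c'')/n`; consequently,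
if `d_H(c',c'') ≥ n/5` and `0 < ε < 1/200`, then `f c' ≥ 1 − 20ε` and
`f c'' ≥ 1 − 20ε` cannot both hold. -/
theorem at_most_one_codeword
    (n : ℕ) (hn : 0 < n)
    (x : Fin n → Bool → ℝ) (hx : ∀ j b, 0 ≤ x j b)
    (hsum : ∀ j, x j false + x j true = 1 / (n : ℝ)) :
    (∀ c' c'' : Fin n → Bool,
      (∑ j, x j (c' j)) + (∑ j, x j (c'' j)) ≤
        2 - (hammingDist c' c'' : ℝ) / n) ∧
    (∀ c' c'' : Fin n → Bool, ∀ ε : ℝ,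
      (hammingDist c' c'' : ℝ) ≥ (n : ℝ) / 5 → 0 < ε → ε < 1 / 200 →
      ¬((∑ j, x j (c' j)) ≥ 1 - 20 * ε ∧ (∑ j, x j (c'' j)) ≥ 1 - 20 * ε)) := by
  have : Nonempty (Fin n) := Fin.pos_iff_nonempty.1 hn
  have hrow : ∀ j, ∑ b, x j b ≤ 1 / (Fintype.card (Fin n) : ℝ) := fun j => by
    rw [Fintype.sum_bool, add_comm, hsum, Fintype.card_fin]
  obtain ⟨hadd, hfar⟩ := at_most_one_codeword_general hx hrow
  rw [Fintype.card_fin] at hadd hfar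
  exact ⟨hadd, fun c' c'' ε hd _ hε =>
    hfar c' c'' (1 / 5) (20 * ε) (by linarith) (by linarith)⟩
end

section
/- Let G be a bipartite graph with vertex set V = U ∪ W (U and W disjoint independent sets), |V| = n where n = m² for a positive integer m, every vertex of degree at most d, and |U| = c·n, |W| = (1−c)·n for some c ∈ [0,1]. Then there exist a partition of U into m (possibly empty) sets S₁,…,S_m and a partition of W into m (possibly empty) sets T₁,…,T_m such that |S_i| ≤ 2m and |T_j| ≤ 2m for all i, j, and for all i, j the number of edges of G with one endpoint in S_i and the other in T_j is at most 2d². -/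
open Finset

/-!
Split `U` arbitrarily into blocks of at most `q` vertices, then distribute `W` over `q` blocks one
vertex at a time. Let `a` and `b` bound the degrees on `U` and on `W`. A block is closed to the
next vertex `w` if it is full, or if `w` would raise its number of edges to some block of `U` above
`2ab`. Blocks may hold twice their average, so fewer than `q / 2` of them are full. A block closed
for the second reason sends at least `2ab` edges to the blocks of `U`, when each block of `U` is
counted with as many copies as `w` has neighbours in it. All blocks together send at most
`b * (q * a)` edges so counted, so at most `q / 2` of them are closed for the second reason, and
some block is open to `w`.
-/

section Greedy

variable {α κ : Type*} [Nonempty κ] [DecidableEq κ]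

theorem exists_forall_fiber_of_forall_exists_insert [DecidableEq α] {P : Finset α → Prop}
    {s : Finset α} (hempty : P ∅)
    (hinsert : ∀ a ∈ s, ∀ t ⊆ s, a ∉ t → ∀ g : α → κ, (∀ k, P {x ∈ t | g x = k}) →
      ∃ k, P (insert a {x ∈ t | g x = k})) :
    ∃ g : α → κ, ∀ k, P {x ∈ s | g x = k} := by
  induction s using Finset.induction_on with
  | empty => exact ⟨Classical.arbitrary _, by simpa using hempty⟩
  | insert a t hat ih =>
    obtain ⟨g, hg⟩ := ih fun b hb u hu =>
      hinsert b (mem_insert_of_mem hb) u (hu.trans (subset_insert a t))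
    obtain ⟨k, hk⟩ := hinsert a (mem_insert_self a t) t (subset_insert a t) hat g hg
    have fiber_update (l : κ) : {x ∈ t | Function.update g a k x = l} = {x ∈ t | g x = l} :=
      filter_congr fun x hx => by rw [Function.update_of_ne (ne_of_mem_of_not_mem hx hat)]
    refine ⟨Function.update g a k, fun l => ?_⟩
    rw [filter_insert, Function.update_self, fiber_update]
    split_ifs with hkl
    · exact hkl ▸ hk
    · exact hg l

theorem exists_forall_card_fiber_le [Fintype κ] {s : Finset α} {n : ℕ}
    (hs : #s ≤ Fintype.card κ * n) : ∃ g : α → κ, ∀ k, #{x ∈ s | g x = k} ≤ n := by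
  classical
  refine exists_forall_fiber_of_forall_exists_insert (P := (#· ≤ n)) (by simp) ?_
  intro a ha t ht hat g _
  have hts : #t < #s := card_lt_card ⟨ht, fun hst => hat (hst ha)⟩
  obtain ⟨k, -, hk⟩ := exists_card_fiber_lt_of_card_lt_mul (s := t) (t := univ) (f := g)
    (hts.trans_le hs)
  exact ⟨k, (card_insert_le _ _).trans hk⟩

end Greedy

section Overload

variable {ι κ : Type*} [Fintype ι] [Fintype κ]

theorem two_mul_card_full_lt {N : κ → ℕ} {n : ℕ} (hN : ∑ k, N k < Fintype.card κ * n) :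
    2 * #{k | 2 * n ≤ N k} < Fintype.card κ := by
  refine Nat.lt_of_mul_lt_mul_right (a := n) ?_
  calc 2 * #{k | 2 * n ≤ N k} * n = #{k | 2 * n ≤ N k} • (2 * n) := by rw [smul_eq_mul]; ring
    _ ≤ ∑ k with 2 * n ≤ N k, N k := card_nsmul_le_sum _ _ _ fun k hk => (mem_filter.1 hk).2
    _ ≤ ∑ k, N k := sum_le_sum_of_subset (filter_subset _ _)
    _ < Fintype.card κ * n := hN

-- If `B < x + y` with `x, y ≤ B`, then `x ≥ 1` and `x * y ≥ x * (B + 1 - x) ≥ B`.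
theorem le_mul_of_lt_add {B x y : ℕ} (hx : x ≤ B) (hy : y ≤ B) (h : B < x + y) : B ≤ x * y := by
  obtain ⟨x, rfl⟩ : ∃ z, x = z + 1 := ⟨x - 1, by omega⟩
  obtain ⟨y, rfl⟩ : ∃ z, y = z + 1 := ⟨y - 1, by omega⟩
  nlinarith

variable {x : ι → ℕ} {E : ι → κ → ℕ}

theorem card_overloaded_mul_le {B : ℕ} (hx : ∀ i, x i ≤ B) (hE : ∀ i k, E i k ≤ B) :
    #{k | ∃ i, B < x i + E i k} * B ≤ ∑ i, x i * ∑ k, E i k := by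
  have le_load (k : κ) (hk : ∃ i, B < x i + E i k) : B ≤ ∑ i, x i * E i k := by
    obtain ⟨i, hi⟩ := hk
    exact (le_mul_of_lt_add (hx i) (hE i k) hi).trans
      (single_le_sum_of_canonicallyOrdered (f := fun i => x i * E i k) (mem_univ i))
  calc #{k | ∃ i, B < x i + E i k} * B
      ≤ ∑ k with ∃ i, B < x i + E i k, ∑ i, x i * E i k :=
        card_nsmul_le_sum _ _ _ fun k hk => le_load k (mem_filter.1 hk).2
    _ ≤ ∑ k, ∑ i, x i * E i k := sum_le_sum_of_subset (filter_subset _ _)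
    _ = ∑ i, x i * ∑ k, E i k := by rw [sum_comm]; simp only [mul_sum]

theorem two_mul_card_overloaded_le {a b : ℕ} (hx : ∑ i, x i ≤ a)
    (hxE : ∀ i, x i + ∑ k, E i k ≤ Fintype.card κ * b) (hE : ∀ i k, E i k ≤ 2 * (a * b)) :
    2 * #{k | ∃ i, 2 * (a * b) < x i + E i k} ≤ Fintype.card κ := by
  have hxa (i : ι) : x i ≤ a := (single_le_sum_of_canonicallyOrdered (mem_univ i)).trans hx
  have hxB (i : ι) : x i ≤ 2 * (a * b) := by
    rcases b.eq_zero_or_pos with rfl | hb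
    · have := hxE i
      omega
    · nlinarith [hxa i]
  rcases (a * b).eq_zero_or_pos with hab | hab
  · have none_overloaded : ¬∃ k i, 2 * (a * b) < x i + E i k := by
      rintro ⟨k, i, h⟩
      have := hxB i
      have := hE i k
      omega
    simp [filter_eq_empty_iff.2 fun k _ hk => none_overloaded ⟨k, hk⟩]
  · refine Nat.le_of_mul_le_mul_right ?_ hab
    calc 2 * #{k | ∃ i, 2 * (a * b) < x i + E i k} * (a * b)
        = #{k | ∃ i, 2 * (a * b) < x i + E i k} * (2 * (a * b)) := by ring
      _ ≤ ∑ i, x i * ∑ k, E i k := card_overloaded_mul_le hxB hE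
      _ ≤ ∑ i, x i * (Fintype.card κ * b) :=
        sum_le_sum fun i _ => Nat.mul_le_mul_left _ (le_of_add_le_right (hxE i))
      _ ≤ a * (Fintype.card κ * b) := by
        rw [← sum_mul]
        exact Nat.mul_le_mul_right _ hx
      _ = Fintype.card κ * (a * b) := by ring

end Overload

theorem exists_balanced_coloring {ι β κ : Type*} [Fintype ι] [Fintype κ] [Nonempty κ]
    [DecidableEq κ] {A : ι → β → ℕ} {W : Finset β} {n a b : ℕ}
    (hW : #W ≤ Fintype.card κ * n) (hrow : ∀ w ∈ W, ∑ i, A i w ≤ a)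
    (hcol : ∀ i, ∑ w ∈ W, A i w ≤ Fintype.card κ * b) :
    ∃ g : β → κ, ∀ k, #{w ∈ W | g w = k} ≤ 2 * n ∧
      ∀ i, ∑ w ∈ W with g w = k, A i w ≤ 2 * (a * b) := by
  classical
  refine exists_forall_fiber_of_forall_exists_insert
    (P := fun T => #T ≤ 2 * n ∧ ∀ i, ∑ w ∈ T, A i w ≤ 2 * (a * b)) (by simp) ?_
  intro w hw T hT hwT g hg
  have hinsert : insert w T ⊆ W := insert_subset hw hT
  have hfull : 2 * #{k | 2 * n ≤ #{v ∈ T | g v = k}} < Fintype.card κ := by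
    refine two_mul_card_full_lt ?_
    calc ∑ k, #{v ∈ T | g v = k} = #T := (card_eq_sum_card_fiberwise (by simp)).symm
      _ < #(insert w T) := by simp [card_insert_of_notMem hwT]
      _ ≤ Fintype.card κ * n := (card_le_card hinsert).trans hW
  have hover : 2 * #{k | ∃ i, 2 * (a * b) < A i w + ∑ v ∈ T with g v = k, A i v} ≤
      Fintype.card κ := by
    refine two_mul_card_overloaded_le (hrow w hw) (fun i => ?_) fun i k => (hg k).2 i
    rw [sum_fiberwise, ← sum_insert hwT]
    exact (sum_le_sum_of_subset hinsert).trans (hcol i)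
  obtain ⟨k, -, hk⟩ := exists_mem_notMem_of_card_lt_card (t := univ)
    (s := ({k | 2 * n ≤ #{v ∈ T | g v = k}} : Finset κ) ∪
      univ.filter fun k => ∃ i, 2 * (a * b) < A i w + ∑ v ∈ T with g v = k, A i v)
    ((card_union_le _ _).trans_lt (by rw [card_univ]; omega))
  simp only [mem_union, mem_filter_univ, not_or, not_le, not_exists, not_lt] at hk
  refine ⟨k, (card_insert_le _ _).trans hk.1, fun i => ?_⟩
  rw [sum_insert fun h => hwT (mem_filter.1 h).1]
  exact hk.2 i

section Relation

variable {α β : Type*} {r : α → β → Prop} [DecidableRel r]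

theorem card_filter_product_eq_sum (S : Finset α) (T : Finset β) :
    #{p ∈ S ×ˢ T | r p.1 p.2} = ∑ w ∈ T, #{u ∈ S | r u w} := by
  simp only [card_filter, sum_product_right]

theorem sum_card_filter_filter_eq {ι : Type*} [Fintype ι] [DecidableEq ι] (p : α → Prop)
    [DecidablePred p] (f : α → ι) (U : Finset α) :
    ∑ i, #{u ∈ {u ∈ U | f u = i} | p u} = #{u ∈ U | p u} := by
  simp only [filter_comm (p := (f · = _))]
  exact (card_eq_sum_card_fiberwise (by simp)).symm

theorem sum_card_filter_le_mul {S : Finset α} {W : Finset β} {q a : ℕ} (hS : #S ≤ q)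
    (ha : ∀ u ∈ S, #{w ∈ W | r u w} ≤ a) : ∑ w ∈ W, #{u ∈ S | r u w} ≤ q * a :=
  calc ∑ w ∈ W, #{u ∈ S | r u w} = ∑ u ∈ S, #{w ∈ W | r u w} :=
        (sum_card_bipartiteAbove_eq_sum_card_bipartiteBelow r).symm
    _ ≤ #S * a := sum_le_card_nsmul _ _ _ ha
    _ ≤ q * a := Nat.mul_le_mul_right _ hS

theorem bipartite_partition_general [DecidableEq α] [DecidableEq β] {U : Finset α} {W : Finset β}
    {p q n a b : ℕ} (hp : 0 < p) (hq : 0 < q) (hU : #U ≤ p * q) (hW : #W ≤ q * n)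
    (ha : ∀ u ∈ U, #{w ∈ W | r u w} ≤ a) (hb : ∀ w ∈ W, #{u ∈ U | r u w} ≤ b) :
    ∃ (S : Fin p → Finset α) (T : Fin q → Finset β),
      (∀ i j, i ≠ j → Disjoint (S i) (S j)) ∧ univ.biUnion S = U ∧
      (∀ i j, i ≠ j → Disjoint (T i) (T j)) ∧ univ.biUnion T = W ∧
      (∀ i, #(S i) ≤ q) ∧ (∀ j, #(T j) ≤ 2 * n) ∧
      ∀ i j, #{e ∈ S i ×ˢ T j | r e.1 e.2} ≤ 2 * (a * b) := by
  have : Nonempty (Fin p) := Fin.pos_iff_nonempty.1 hp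
  have : Nonempty (Fin q) := Fin.pos_iff_nonempty.1 hq
  obtain ⟨f, hf⟩ := exists_forall_card_fiber_le (κ := Fin p) (by simpa using hU)
  obtain ⟨g, hg⟩ := exists_balanced_coloring (κ := Fin q)
    (A := fun i w => #{u ∈ {u ∈ U | f u = i} | r u w}) (by simpa using hW)
    (fun w hw => (sum_card_filter_filter_eq (r · w) f U).trans_le (hb w hw))
    (fun i => by
      rw [Fintype.card_fin]
      exact sum_card_filter_le_mul (hf i) fun u hu => ha u (mem_filter.1 hu).1)
  refine ⟨fun i => {u ∈ U | f u = i}, fun j => {w ∈ W | g w = j},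
    fun _ _ => Set.pairwiseDisjoint_filter f Set.univ U trivial trivial,
    biUnion_filter_eq_of_maps_to (by simp),
    fun _ _ => Set.pairwiseDisjoint_filter g Set.univ W trivial trivial,
    biUnion_filter_eq_of_maps_to (by simp), hf, fun j => (hg j).1, fun i j => ?_⟩
  rw [card_filter_product_eq_sum, mul_comm a b]
  exact (hg j).2 i

end Relation

theorem card_filter_adj_le_degree {V : Type*} [Fintype V] (G : SimpleGraph V) [DecidableRel G.Adj]
    (X : Finset V) (v : V) : #{u ∈ X | G.Adj v u} ≤ G.degree v :=
  card_le_card fun u hu => by simpa using (mem_filter.1 hu).2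

/-- Lemma 2 of the paper; Lemma 1 of Deligkas, Fearnley and Savani.
A bipartite graph on `n = m²` vertices with sides `U`, `W` and maximum degree `d`
admits partitions of `U` and `W` into `m` blocks each of size at most `2m`, such that
any pair of blocks spans at most `2d²` edges. -/
theorem bipartite_partition
    {V : Type*} [Fintype V] [DecidableEq V]
    (G : SimpleGraph V) [DecidableRel G.Adj]
    (U W : Finset V)
    (hdisj : Disjoint U W) (hcover : U ∪ W = Finset.univ)
    (hUind : ∀ u ∈ U, ∀ v ∈ U, ¬G.Adj u v)
    (hWind : ∀ u ∈ W, ∀ v ∈ W, ¬G.Adj u v)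
    (d m : ℕ) (hm : 0 < m)
    (hn : Fintype.card V = m * m)
    (hdeg : ∀ v : V, G.degree v ≤ d)
    (c : ℝ) (hc : c ∈ Set.Icc (0 : ℝ) 1)
    (hU : (U.card : ℝ) = c * (Fintype.card V : ℝ))
    (hW : (W.card : ℝ) = (1 - c) * (Fintype.card V : ℝ)) :
    ∃ S T : Fin m → Finset V,
      (∀ i j : Fin m, i ≠ j → Disjoint (S i) (S j)) ∧
      Finset.univ.biUnion S = U ∧
      (∀ i j : Fin m, i ≠ j → Disjoint (T i) (T j)) ∧
      Finset.univ.biUnion T = W ∧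
      (∀ i, (S i).card ≤ 2 * m) ∧
      (∀ j, (T j).card ≤ 2 * m) ∧
      (∀ i j, (((S i) ×ˢ (T j)).filter fun p => G.Adj p.1 p.2).card ≤ 2 * d ^ 2) := by
  have hdegX (X : Finset V) (v : V) : #{u ∈ X | G.Adj v u} ≤ d :=
    (card_filter_adj_le_degree G X v).trans (hdeg v)
  obtain ⟨S, T, hS, hSU, hT, hTW, hSm, hTm, hST⟩ := bipartite_partition_general (r := G.Adj) hm hm
    (hn ▸ card_le_univ U) (hn ▸ card_le_univ W) (fun u _ => hdegX W u)
    (fun w _ => by simpa only [G.adj_comm] using hdegX U w)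
  exact ⟨S, T, hS, hSU, hT, hTW, fun i => (hSm i).trans (by omega), hTm,
    by simpa only [sq] using hST⟩
end

section
/- Let Θ be a finite set of states, R a finite set of receivers with |R| = n̄ ≥ 2, each r ∈ R with a finite action set A^r of cardinality at most ϱ, where ϱ ≥ 2, and utility u^r : A^r × Θ → [0,1]. Let 0 < ε ≤ 1, 0 < δ ≤ 1, p* ∈ Δ_Θ, and k = ⌈32·ln(4·n̄·ϱ/δ)/ε²⌉. Let γ̃ be the empirical distribution of k i.i.d. samples drawn from p*, and let P = {p ∈ Δ_Θ : |Σ_θ p_θ·u^r(a,θ) − Σ_θ p*_θ·u^r(a,θ)| ≤ ε/2 for every receiver r and every a ∈ A^r}. Then for every θ ∈ Θ and every integer i with 0 ≤ i ≤ k and |i/k − p*_θ| ≤ ε/4, it holds that Pr(γ̃ ∈ P and γ̃_θ = i/k) ≥ (1 − δ/2)·Pr(γ̃_θ = i/k). -/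
open Finset

/-- The empirical distribution of a vector `s` of `k` samples from `Θ`:
`empDist s θ` is the fraction of samples equal to `θ`. -/
noncomputable def empDist {Θ : Type*} [Fintype Θ] [DecidableEq Θ] {k : ℕ}
    (s : Fin k → Θ) (θ : Θ) : ℝ :=
  ((Finset.univ.filter fun t => s t = θ).card : ℝ) / k

/-!
Condition on the set `S` of indices `t` with `s t = θ`, not merely on its cardinality. The sample
vectors with occurrence set `S` form a box, so under this conditioning the samples remain
independent, and Hoeffding's inequality applies to `∑ t, u (s t)`. Its conditional mean divided by
`k` differs from the mean of `u` under `p` by `(#S / k - p θ) * (a - b)`, where `a, b ∈ [0, 1]` are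
the conditional means of `u` on `{θ}` and on its complement; the hypothesis on the frequency of `θ`
makes this at most `ε / 4`. The remaining `ε / 4` is the deviation left to Hoeffding, and a union
bound over receivers and actions concludes.
-/

section UnionBound

variable {α J : Type*} [Fintype J]

lemma one_sub_card_mul_mul_sum_le_sum_filter_forall (s : Finset α) (w : α → ℝ)
    (hw : ∀ x ∈ s, 0 ≤ w x) (G : J → α → Prop) [∀ j, DecidablePred (G j)] (β : ℝ)
    (hG : ∀ j, ∑ x ∈ s with ¬ G j x, w x ≤ β * ∑ x ∈ s, w x) :
    (1 - Fintype.card J * β) * ∑ x ∈ s, w x ≤ ∑ x ∈ s with ∀ j, G j x, w x := by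
  have hunion : ∑ x ∈ s with ¬ ∀ j, G j x, w x ≤ ∑ j, ∑ x ∈ s with ¬ G j x, w x := by
    simp only [sum_filter]
    rw [sum_comm]
    refine sum_le_sum fun x hx => ?_
    have hterm : ∀ j ∈ univ, 0 ≤ if ¬ G j x then w x else 0 := fun j _ =>
      ite_nonneg (hw x hx) le_rfl
    by_cases h : ∀ j, G j x
    · rw [if_neg (not_not.mpr h)]
      exact sum_nonneg hterm
    · obtain ⟨j, hj⟩ := not_forall.mp h
      rw [if_pos h]
      simpa only [if_pos hj] using single_le_sum hterm (mem_univ j)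
  have hfail : ∑ j, ∑ x ∈ s with ¬ G j x, w x ≤ Fintype.card J * (β * ∑ x ∈ s, w x) := by
    simpa only [card_univ, nsmul_eq_mul] using sum_le_card_nsmul univ _ _ fun j _ => hG j
  linarith [sum_filter_add_sum_filter_not s (fun x => ∀ j, G j x) w]

end UnionBound

section CenterMass

variable {α R E : Type*} [Field R] [LinearOrder R] [IsStrictOrderedRing R] [AddCommGroup E]
  [Module R E]

lemma sum_smul_centerMass_of_nonneg (B : Finset α) (w : α → R) (z : α → E)
    (hw : ∀ x ∈ B, 0 ≤ w x) : (∑ x ∈ B, w x) • B.centerMass w z = ∑ x ∈ B, w x • z x := by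
  by_cases hmass : ∑ x ∈ B, w x = 0
  · have hzero := (sum_eq_zero_iff_of_nonneg hw).mp hmass
    rw [hmass, zero_smul, sum_eq_zero fun x hx => by rw [hzero x hx, zero_smul]]
  · exact smul_inv_smul₀ hmass _

-- Total mass zero is harmless because `centerMass` then takes the junk value `0 ∈ K`.
lemma centerMass_mem_of_zero_mem {K : Set E} (hK : Convex R K) (h0 : (0 : E) ∈ K) (B : Finset α)
    (w : α → R) (z : α → E) (hw : ∀ x ∈ B, 0 ≤ w x) (hz : ∀ x ∈ B, z x ∈ K) :
    B.centerMass w z ∈ K := by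
  rcases (sum_nonneg hw).eq_or_lt with hmass | hmass
  · rwa [centerMass, ← hmass, inv_zero, zero_smul]
  · exact hK.centerMass_mem hw hmass hz

end CenterMass

section Hoeffding

lemma sum_mul_exp_le_of_sum_mul_eq_zero {α : Type*} (B : Finset α) (p X : α → ℝ)
    (hp : ∀ x ∈ B, 0 ≤ p x) (hX : ∀ x ∈ B, |X x| ≤ 1) (hmean : ∑ x ∈ B, p x * X x = 0) (c : ℝ) :
    ∑ x ∈ B, p x * Real.exp (c * X x) ≤ Real.exp (c ^ 2 / 2) * ∑ x ∈ B, p x :=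
  calc ∑ x ∈ B, p x * Real.exp (c * X x)
      ≤ ∑ x ∈ B, p x * (Real.cosh c + X x * Real.sinh c) := by
        refine sum_le_sum fun x hx => mul_le_mul_of_nonneg_left ?_ (hp x hx)
        rw [mul_comm]
        exact Real.exp_mul_le_cosh_add_mul_sinh (hX x hx) c
    _ = Real.cosh c * ∑ x ∈ B, p x + Real.sinh c * ∑ x ∈ B, p x * X x := by
        rw [mul_sum, mul_sum, ← sum_add_distrib]
        exact sum_congr rfl fun x _ => by ring
    _ = Real.cosh c * ∑ x ∈ B, p x := by rw [hmean, mul_zero, add_zero]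
    _ ≤ Real.exp (c ^ 2 / 2) * ∑ x ∈ B, p x :=
        mul_le_mul_of_nonneg_right (Real.cosh_le_exp_half_sq c) (sum_nonneg hp)

lemma exp_mul_sum_filter_lt_abs_le {α : Type*} (A : Finset α) (w G : α → ℝ)
    (hw : ∀ x ∈ A, 0 ≤ w x) {c : ℝ} (hc : 0 ≤ c) (a : ℝ) :
    Real.exp (c * a) * ∑ x ∈ A with a < |G x|, w x ≤
      ∑ x ∈ A, w x * Real.exp (c * G x) + ∑ x ∈ A, w x * Real.exp (-c * G x) := by
  have hexp : ∀ x, a < |G x| → Real.exp (c * a) ≤ Real.exp (c * G x) + Real.exp (-c * G x) := by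
    intro x hx
    calc Real.exp (c * a) ≤ Real.exp |c * G x| := by
          rw [abs_mul, abs_of_nonneg hc]
          gcongr
      _ ≤ Real.exp (c * G x) + Real.exp (-c * G x) := by
          rw [neg_mul]
          exact Real.exp_abs_le _
  simp only [← sum_add_distrib, ← mul_add]
  calc Real.exp (c * a) * ∑ x ∈ A with a < |G x|, w x
      ≤ ∑ x ∈ A with a < |G x|, w x * (Real.exp (c * G x) + Real.exp (-c * G x)) := by
        rw [mul_comm, sum_mul]
        refine sum_le_sum fun x hx => ?_
        obtain ⟨hxA, hlt⟩ := mem_filter.mp hx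
        exact mul_le_mul_of_nonneg_left (hexp x hlt) (hw x hxA)
    _ ≤ ∑ x ∈ A, w x * (Real.exp (c * G x) + Real.exp (-c * G x)) :=
        sum_le_sum_of_subset_of_nonneg (filter_subset _ _) fun x hx _ =>
          mul_nonneg (hw x hx) (by positivity)

variable {ι : Type*} [Fintype ι] [DecidableEq ι] {Ω : ι → Type*} (B : ∀ i, Finset (Ω i))
  (p X : ∀ i, Ω i → ℝ)

lemma sum_piFinset_prod_mul_exp_le (hp : ∀ i, ∀ x ∈ B i, 0 ≤ p i x)
    (hX : ∀ i, ∀ x ∈ B i, |X i x| ≤ 1) (hmean : ∀ i, ∑ x ∈ B i, p i x * X i x = 0) (c : ℝ) :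
    ∑ s ∈ Fintype.piFinset B, (∏ i, p i (s i)) * Real.exp (c * ∑ i, X i (s i)) ≤
      Real.exp (Fintype.card ι * c ^ 2 / 2) * ∑ s ∈ Fintype.piFinset B, ∏ i, p i (s i) :=
  calc ∑ s ∈ Fintype.piFinset B, (∏ i, p i (s i)) * Real.exp (c * ∑ i, X i (s i))
      = ∏ i, ∑ x ∈ B i, p i x * Real.exp (c * X i x) := by
        simp only [prod_univ_sum, mul_sum, Real.exp_sum, prod_mul_distrib]
    _ ≤ ∏ i, (Real.exp (c ^ 2 / 2) * ∑ x ∈ B i, p i x) :=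
        prod_le_prod
          (fun i _ => sum_nonneg fun x hx => mul_nonneg (hp i x hx) (Real.exp_pos _).le)
          fun i _ => sum_mul_exp_le_of_sum_mul_eq_zero (B i) (p i) (X i) (hp i) (hX i) (hmean i) c
    _ = Real.exp (Fintype.card ι * c ^ 2 / 2) *
          ∑ s ∈ Fintype.piFinset B, ∏ i, p i (s i) := by
        rw [prod_mul_distrib, prod_univ_sum, prod_const, card_univ, ← Real.exp_nat_mul,
          mul_div_assoc]

-- Unnormalised weights allow boxes of mass zero, on which a probability measure cannot be
-- conditioned as the measure-theoretic Hoeffding inequality would require.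
lemma sum_piFinset_filter_lt_abs_sum_le (hp : ∀ i, ∀ x ∈ B i, 0 ≤ p i x)
    (hX : ∀ i, ∀ x ∈ B i, |X i x| ≤ 1) (hmean : ∀ i, ∑ x ∈ B i, p i x * X i x = 0)
    {η : ℝ} (hη : 0 ≤ η) :
    ∑ s ∈ Fintype.piFinset B with Fintype.card ι * η < |∑ i, X i (s i)|, ∏ i, p i (s i) ≤
      2 * Real.exp (-(Fintype.card ι * η ^ 2 / 2)) *
        ∑ s ∈ Fintype.piFinset B, ∏ i, p i (s i) := by
  set n : ℝ := (Fintype.card ι : ℝ)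
  set W := ∑ s ∈ Fintype.piFinset B, ∏ i, p i (s i)
  have hw : ∀ s ∈ Fintype.piFinset B, 0 ≤ ∏ i, p i (s i) := fun s hs =>
    prod_nonneg fun i _ => hp i _ (Fintype.mem_piFinset.mp hs i)
  have hchernoff := exp_mul_sum_filter_lt_abs_le (Fintype.piFinset B) (fun s => ∏ i, p i (s i))
    (fun s => ∑ i, X i (s i)) hw hη (n * η)
  have hpos := sum_piFinset_prod_mul_exp_le B p X hp hX hmean η
  have hneg := sum_piFinset_prod_mul_exp_le B p X hp hX hmean (-η)
  rw [neg_sq] at hneg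
  have hexp : Real.exp (n * η ^ 2 / 2) =
      Real.exp (η * (n * η)) * Real.exp (-(n * η ^ 2 / 2)) := by
    rw [← Real.exp_add]
    congr 1
    ring
  refine le_of_mul_le_mul_left ?_ (Real.exp_pos (η * (n * η)))
  calc _ ≤ 2 * Real.exp (n * η ^ 2 / 2) * W := by linarith
    _ = Real.exp (η * (n * η)) * (2 * Real.exp (-(n * η ^ 2 / 2)) * W) := by
        rw [hexp]
        ring

lemma sum_piFinset_filter_lt_abs_sum_sub_centerMass_le (u : ∀ i, Ω i → ℝ)
    (hp : ∀ i, ∀ x ∈ B i, 0 ≤ p i x) (hu : ∀ i, ∀ x ∈ B i, u i x ∈ Set.Icc (0 : ℝ) 1)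
    {η : ℝ} (hη : 0 ≤ η) :
    ∑ s ∈ Fintype.piFinset B with
        Fintype.card ι * η < |∑ i, (u i (s i) - (B i).centerMass (p i) (u i))|,
          ∏ i, p i (s i) ≤
      2 * Real.exp (-(Fintype.card ι * η ^ 2 / 2)) *
        ∑ s ∈ Fintype.piFinset B, ∏ i, p i (s i) := by
  refine sum_piFinset_filter_lt_abs_sum_le B p
    (fun i x => u i x - (B i).centerMass (p i) (u i)) hp (fun i x hx => ?_) (fun i => ?_) hη
  · exact Real.dist_le_of_mem_Icc_01 (hu i x hx) (centerMass_mem_of_zero_mem (convex_Icc 0 1)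
      (Set.left_mem_Icc.mpr zero_le_one) (B i) (p i) (u i) (hp i) (hu i))
  · have hmass := sum_smul_centerMass_of_nonneg (B i) (p i) (u i) (hp i)
    simp only [smul_eq_mul] at hmass
    simp only [mul_sub, sum_sub_distrib, ← sum_mul, hmass, sub_self]

end Hoeffding

section Stratum

variable {ι Θ : Type*} [Fintype Θ] [DecidableEq Θ] [DecidableEq ι]

/-- The values allowed at index `t` in a sample vector that takes the value `θ` exactly at the
indices in `S`. Such vectors form the box `Fintype.piFinset (stratum S θ)`, on which the
coordinates are independent. -/
def stratum (S : Finset ι) (θ : Θ) (t : ι) : Finset Θ :=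
  if t ∈ S then {θ} else {θ}ᶜ

variable [Fintype ι]

lemma filter_filter_eq_piFinset_stratum (S : Finset ι) (θ : Θ) :
    ({s : ι → Θ | ({t | s t = θ} : Finset ι) = S} : Finset (ι → Θ)) =
      Fintype.piFinset (stratum S θ) := by
  ext s
  rw [mem_filter_univ, Fintype.mem_piFinset, Finset.ext_iff]
  refine forall_congr' fun t => ?_
  by_cases ht : t ∈ S <;> simp [stratum, ht]

lemma sum_centerMass_stratum (S : Finset ι) (θ : Θ) (p u : Θ → ℝ) :
    ∑ t, (stratum S θ t).centerMass p u =
      #S * ({θ} : Finset Θ).centerMass p u +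
        (Fintype.card ι - #S) * ({θ}ᶜ : Finset Θ).centerMass p u := by
  have hnotMem : ({t | t ∉ S} : Finset ι) = Sᶜ := by
    ext t
    simp
  simp only [stratum, apply_ite (fun B : Finset Θ => B.centerMass p u), sum_ite, sum_const,
    nsmul_eq_mul, filter_univ_mem, hnotMem, card_compl, Nat.cast_sub (card_le_univ S)]

end Stratum

section Empirical

variable {Θ : Type*} [Fintype Θ] [DecidableEq Θ] {k : ℕ}

lemma sum_empDist_mul (s : Fin k → Θ) (u : Θ → ℝ) :
    ∑ x, empDist s x * u x = (∑ t, u (s t)) / k := by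
  simp only [← sum_fiberwise' univ s u, sum_const, nsmul_eq_mul, empDist, div_mul_eq_mul_div,
    sum_div]

variable {p u : Θ → ℝ}

lemma abs_sum_centerMass_stratum_div_sub_le (hk : 0 < k) (hp : ∀ x, 0 ≤ p x)
    (hp1 : ∑ x, p x = 1) (hu : ∀ x, u x ∈ Set.Icc (0 : ℝ) 1) (θ : Θ) (S : Finset (Fin k)) :
    |(∑ t, (stratum S θ t).centerMass p u) / k - ∑ x, p x * u x| ≤ |(#S : ℝ) / k - p θ| := by
  have hmem (B : Finset Θ) : B.centerMass p u ∈ Set.Icc (0 : ℝ) 1 :=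
    centerMass_mem_of_zero_mem (convex_Icc 0 1) (Set.left_mem_Icc.mpr zero_le_one) B p u
      (fun x _ => hp x) fun x _ => hu x
  have hmass (B : Finset Θ) : ∑ x ∈ B, p x * u x = (∑ x ∈ B, p x) * B.centerMass p u :=
    (sum_smul_centerMass_of_nonneg B p u fun x _ => hp x).symm
  have hcompl : ∑ x ∈ {θ}ᶜ, p x = 1 - p θ := by
    rw [← hp1, Fintype.sum_eq_add_sum_compl θ, add_sub_cancel_left]
  have htotal : ∑ x, p x * u x =
      p θ * ({θ} : Finset Θ).centerMass p u + (1 - p θ) * ({θ}ᶜ : Finset Θ).centerMass p u := by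
    rw [← sum_add_sum_compl {θ}, hmass {θ}, hmass {θ}ᶜ, sum_singleton, hcompl]
  have hdiff : (∑ t, (stratum S θ t).centerMass p u) / k - ∑ x, p x * u x =
      ((#S : ℝ) / k - p θ) *
        (({θ} : Finset Θ).centerMass p u - ({θ}ᶜ : Finset Θ).centerMass p u) := by
    rw [sum_centerMass_stratum, htotal, Fintype.card_fin]
    field_simp
    ring
  rw [hdiff, abs_mul]
  exact mul_le_of_le_one_right (abs_nonneg _) (Real.dist_le_of_mem_Icc_01 (hmem _) (hmem _))

lemma lt_abs_sum_sub_centerMass_stratum (hk : 0 < k) (hp : ∀ x, 0 ≤ p x) (hp1 : ∑ x, p x = 1)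
    (hu : ∀ x, u x ∈ Set.Icc (0 : ℝ) 1) {η κ : ℝ} {θ : Θ} {S : Finset (Fin k)}
    (hS : |(#S : ℝ) / k - p θ| ≤ κ) {s : Fin k → Θ}
    (hs : η + κ < |∑ x, empDist s x * u x - ∑ x, p x * u x|) :
    k * η < |∑ t, (u (s t) - (stratum S θ t).centerMass p u)| := by
  have hk' : (0 : ℝ) < k := Nat.cast_pos.mpr hk
  have hbias := (abs_sum_centerMass_stratum_div_sub_le hk hp hp1 hu θ S).trans hS
  have htriangle := abs_sub_le ((∑ t, u (s t)) / k)
    ((∑ t, (stratum S θ t).centerMass p u) / k) (∑ x, p x * u x)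
  rw [sum_empDist_mul] at hs
  rw [← sub_div, ← sum_sub_distrib, abs_div, abs_of_pos hk'] at htriangle
  rw [← lt_div_iff₀' hk']
  linarith

lemma sum_filter_stratum_deviation_le (hk : 0 < k) (hp : ∀ x, 0 ≤ p x) (hp1 : ∑ x, p x = 1)
    (hu : ∀ x, u x ∈ Set.Icc (0 : ℝ) 1) {η κ : ℝ} (hη : 0 ≤ η) {θ : Θ} {S : Finset (Fin k)}
    (hS : |(#S : ℝ) / k - p θ| ≤ κ) :
    ∑ s ∈ Fintype.piFinset (stratum S θ) with
        ¬ |∑ x, empDist s x * u x - ∑ x, p x * u x| ≤ η + κ, ∏ t, p (s t) ≤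
      2 * Real.exp (-(k * η ^ 2 / 2)) *
        ∑ s ∈ Fintype.piFinset (stratum S θ), ∏ t, p (s t) := by
  have hhoeffding := sum_piFinset_filter_lt_abs_sum_sub_centerMass_le (stratum S θ)
    (fun _ => p) (fun _ => u) (fun _ x _ => hp x) (fun _ x _ => hu x) hη
  rw [Fintype.card_fin] at hhoeffding
  refine (sum_le_sum_of_subset_of_nonneg (monotone_filter_right _ fun s _ hs => ?_)
    fun s _ _ => prod_nonneg fun t _ => hp _).trans hhoeffding
  exact lt_abs_sum_sub_centerMass_stratum hk hp hp1 hu hS (not_le.mp hs)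

lemma filter_filter_empDist_eq (θ : Θ) (v : ℝ) (S : Finset (Fin k)) :
    ({s ∈ {s : Fin k → Θ | empDist s θ = v} | ({t | s t = θ} : Finset (Fin k)) = S} :
        Finset (Fin k → Θ)) =
      if (#S : ℝ) / k = v then Fintype.piFinset (stratum S θ) else ∅ := by
  rw [filter_filter]
  split_ifs with hS
  · rw [← filter_filter_eq_piFinset_stratum]
    refine filter_congr fun s _ => and_iff_right_of_imp ?_
    rintro rfl
    exact hS
  · rw [filter_eq_empty_iff]
    rintro s - ⟨hsv, rfl⟩
    exact hS hsv

lemma sum_filter_empDist_eq_deviation_le (hp : ∀ x, 0 ≤ p x) (hp1 : ∑ x, p x = 1)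
    (hu : ∀ x, u x ∈ Set.Icc (0 : ℝ) 1) {η κ : ℝ} (hη : 0 ≤ η) {θ : Θ} {v : ℝ}
    (hv : |v - p θ| ≤ κ) :
    ∑ s ∈ {s : Fin k → Θ | empDist s θ = v} with
        ¬ |∑ x, empDist s x * u x - ∑ x, p x * u x| ≤ η + κ, ∏ t, p (s t) ≤
      2 * Real.exp (-(k * η ^ 2 / 2)) * ∑ s : Fin k → Θ with empDist s θ = v, ∏ t, p (s t) := by
  have hw : ∀ s : Fin k → Θ, 0 ≤ ∏ t, p (s t) := fun s => prod_nonneg fun t _ => hp _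
  -- For `k = 0` the division in `empDist` is junk, but the factor on the right is then `2`.
  rcases k.eq_zero_or_pos with rfl | hk
  · simp only [CharP.cast_eq_zero, zero_mul, zero_div, neg_zero, Real.exp_zero, mul_one]
    refine (sum_le_sum_of_subset_of_nonneg (filter_subset _ _) fun s _ _ => hw s).trans ?_
    exact le_mul_of_one_le_left (sum_nonneg fun s _ => hw s) one_le_two
  rw [← sum_fiberwise _ (fun s => ({t | s t = θ} : Finset (Fin k))),
    ← sum_fiberwise {s : Fin k → Θ | empDist s θ = v} (fun s => ({t | s t = θ} : Finset (Fin k))),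
    mul_sum]
  refine sum_le_sum fun S _ => ?_
  rw [filter_comm, filter_filter_empDist_eq]
  split_ifs with hS
  · exact sum_filter_stratum_deviation_le hk hp hp1 hu hη (hS ▸ hv)
  · simp only [filter_empty, sum_empty, mul_zero, le_refl]

lemma one_sub_mul_sum_le_sum_forall_abs_sub_le {J : Type*} [Fintype J] {u : J → Θ → ℝ}
    (hp : ∀ x, 0 ≤ p x) (hp1 : ∑ x, p x = 1) (hu : ∀ j x, u j x ∈ Set.Icc (0 : ℝ) 1)
    {η κ : ℝ} (hη : 0 ≤ η) {θ : Θ} {v : ℝ} (hv : |v - p θ| ≤ κ) :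
    (1 - Fintype.card J * (2 * Real.exp (-(k * η ^ 2 / 2)))) *
        ∑ s : Fin k → Θ with empDist s θ = v, ∏ t, p (s t) ≤
      ∑ s ∈ {s : Fin k → Θ | empDist s θ = v} with
        ∀ j, |∑ x, empDist s x * u j x - ∑ x, p x * u j x| ≤ η + κ, ∏ t, p (s t) :=
  one_sub_card_mul_mul_sum_le_sum_filter_forall _ _
    (fun _ _ => prod_nonneg fun _ _ => hp _) _ _
    fun j => sum_filter_empDist_eq_deviation_le hp hp1 (hu j) hη hv

end Empirical

lemma mul_two_mul_exp_neg_le {N : ℝ} (hN : 0 ≤ N) {ε δ k : ℝ} (hε : 0 < ε) (hδ : 0 < δ)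
    (hk : 32 * Real.log (4 * N / δ) / ε ^ 2 ≤ k) :
    N * (2 * Real.exp (-(k * (ε / 4) ^ 2 / 2))) ≤ δ / 2 := by
  rcases hN.eq_or_lt with rfl | hN
  · rw [zero_mul]
    positivity
  have hlog : Real.log (4 * N / δ) ≤ k * (ε / 4) ^ 2 / 2 := by
    rw [div_le_iff₀ (by positivity)] at hk
    linarith
  calc N * (2 * Real.exp (-(k * (ε / 4) ^ 2 / 2)))
      ≤ N * (2 * Real.exp (-Real.log (4 * N / δ))) := by gcongr
    _ = δ / 2 := by
        rw [Real.exp_neg, Real.exp_log (by positivity)]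
        field_simp
        norm_num

lemma card_sigma_le_card_mul {R : Type*} [Fintype R] (A : R → Type*) [∀ r, Fintype (A r)] {m : ℕ}
    (hm : ∀ r, Fintype.card (A r) ≤ m) : Fintype.card (Σ r, A r) ≤ Fintype.card R * m := by
  rw [Fintype.card_sigma]
  exact sum_le_card_nsmul univ _ m fun r _ => hm r

theorem bicriteria_1_general {Θ R : Type*} [Fintype Θ] [DecidableEq Θ] [Fintype R]
    (A : R → Type*) [∀ r, Fintype (A r)] (ϱ : ℕ) (hϱ : ∀ r, Fintype.card (A r) ≤ ϱ)
    (u : (r : R) → A r → Θ → ℝ) (hu : ∀ r (a : A r) (θ : Θ), u r a θ ∈ Set.Icc (0 : ℝ) 1)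
    {ε δ : ℝ} (hε : 0 < ε) (hδ : 0 < δ) {k : ℕ}
    (hk : 32 * Real.log (4 * Fintype.card R * ϱ / δ) / ε ^ 2 ≤ k)
    {p : Θ → ℝ} (hp : ∀ θ, 0 ≤ p θ) (hp1 : ∑ θ, p θ = 1)
    {θ : Θ} {v : ℝ} (hv : |v - p θ| ≤ ε / 4) :
    (1 - δ / 2) * ∑ s : Fin k → Θ with empDist s θ = v, ∏ t, p (s t) ≤
      ∑ s : Fin k → Θ with
        (∀ r (a : A r), |(∑ x, empDist s x * u r a x) - ∑ x, p x * u r a x| ≤ ε / 2) ∧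
          empDist s θ = v, ∏ t, p (s t) := by
  have hcard : (Fintype.card (Σ r, A r) : ℝ) ≤ Fintype.card R * ϱ := by
    exact_mod_cast card_sigma_le_card_mul A hϱ
  rw [mul_assoc 4] at hk
  have hfail : Fintype.card (Σ r, A r) * (2 * Real.exp (-(k * (ε / 4) ^ 2 / 2))) ≤ δ / 2 :=
    (mul_le_mul_of_nonneg_right hcard (by positivity)).trans
      (mul_two_mul_exp_neg_le (by positivity) hε hδ hk)
  have hconc := one_sub_mul_sum_le_sum_forall_abs_sub_le (u := fun j : Σ r, A r => u j.1 j.2)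
    hp hp1 (fun j => hu j.1 j.2) (by positivity : 0 ≤ ε / 4) hv (k := k)
  rw [show ε / 4 + ε / 4 = ε / 2 by ring, filter_filter] at hconc
  simp only [Sigma.forall, and_comm (a := empDist _ θ = v)] at hconc
  exact (mul_le_mul_of_nonneg_right (sub_le_sub_left hfail 1)
    (sum_nonneg fun s _ => prod_nonneg fun t _ => hp _)).trans hconc

/-- Lemma 11, `lemma:bicriteria_1`.
Let `γ̃` be the empirical distribution of `k` i.i.d. samples from `pstar`, where
`k = ⌈32·ln(4 n̄ ϱ/δ)/ε²⌉`, and let `P` be the set of posteriors whose induced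
expected utilities are `ε/2`-close to those of `pstar` for every receiver and action.
Then for every `θ` and every `i ≤ k` with `|i/k − pstar θ| ≤ ε/4`,
`Pr(γ̃ ∈ P ∧ γ̃_θ = i/k) ≥ (1 − δ/2)·Pr(γ̃_θ = i/k)`.
Probabilities are expressed as sums of the product weights `∏ t, pstar (s t)` over
sample vectors `s : Fin k → Θ`. -/
theorem bicriteria_1
    {Θ R : Type*} [Fintype Θ] [DecidableEq Θ] [Nonempty Θ] [Fintype R]
    (A : R → Type*) [∀ r, Fintype (A r)] [∀ r, Nonempty (A r)]
    (nbar ϱ : ℕ) (hcard : Fintype.card R = nbar) (hn2 : 2 ≤ nbar)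
    (hϱ : ∀ r, Fintype.card (A r) ≤ ϱ) (hϱ2 : 2 ≤ ϱ)
    (u : (r : R) → A r → Θ → ℝ)
    (hu : ∀ r (a : A r) (θ : Θ), u r a θ ∈ Set.Icc (0 : ℝ) 1)
    (ε δ : ℝ) (hε0 : 0 < ε) (hε1 : ε ≤ 1) (hδ0 : 0 < δ) (hδ1 : δ ≤ 1)
    (k : ℕ) (hk : k = ⌈32 * Real.log (4 * nbar * ϱ / δ) / ε ^ 2⌉₊)
    (pstar : Θ → ℝ) (hp0 : ∀ θ, 0 ≤ pstar θ) (hp1 : ∑ θ, pstar θ = 1)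
    (θ : Θ) (i : ℕ) (hik : i ≤ k)
    (hclose : |(i : ℝ) / k - pstar θ| ≤ ε / 4) :
    (1 - δ / 2) *
        ∑ s ∈ Finset.univ.filter (fun s : Fin k → Θ => empDist s θ = (i : ℝ) / k),
          ∏ t, pstar (s t) ≤
      ∑ s ∈ Finset.univ.filter (fun s : Fin k → Θ =>
            (∀ r (a : A r),
              |(∑ θ', empDist s θ' * u r a θ') - ∑ θ', pstar θ' * u r a θ'| ≤ ε / 2) ∧
            empDist s θ = (i : ℝ) / k),
          ∏ t, pstar (s t) := by
  subst hcard hk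
  exact bicriteria_1_general A ϱ hϱ u hu hε0 hδ0 (Nat.le_ceil _) hp0 hp1 hclose
end

section
/- Let n̄ ≥ 2 and ϱ ≥ 2 be integers, let 0 < ε ≤ 1 and 0 < δ ≤ 1 be reals, let k = ⌈32·ln(4·n̄·ϱ/δ)/ε²⌉, let Θ be a finite set, and let p* ∈ Δ_Θ. Let γ̃ be the empirical distribution of k i.i.d. samples drawn from p*. Then for every θ ∈ Θ, Pr(|γ̃_θ − p*_θ| ≥ ε/4) ≤ (δ/2)·p*_θ. Equivalently, if X is a binomial random variable with parameters k and p ∈ [0,1], then Pr(|X/k − p| ≥ ε/4) ≤ (δ/2)·p. -/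
open Finset

open MeasureTheory ProbabilityTheory

/-!
An event `A` of probability `p = exp (-M)` has the mean-zero indicator `1_A - p`, whose sub-Gaussian
variance proxy is not merely Hoeffding's `1 / 4` but improves with `M`: it is at most `2 / (2 + M)`.
For `M ≤ 2` Hoeffding's lemma is enough. For `2 ≤ M` the exponential moment at `u ≤ M` is controlled
by the monotonicity of `(exp u - 1 - u) / u ^ 2`, and the one at `u ≥ M` by `2 * exp (u - M)`.

With `k` independent copies, both tails of the frequency at distance `a` are then at most
`exp (-k * a ^ 2 * (2 + M) / 4)`. If `2 * L ≤ k * a ^ 2` and `2 ≤ L`, this is at most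
`exp (-(L + M)) = exp (-L) * p`: the factor `p` comes from the growth of the exponent with `M`.
-/

section RealBounds

theorem integral_one_sub_mul_sq_mul_exp (u : ℝ) :
    ∫ t in (0 : ℝ)..1, (1 - t) * u ^ 2 * Real.exp (t * u) = Real.exp u - 1 - u := by
  have hderiv (t : ℝ) : HasDerivAt (fun t ↦ ((1 - t) * u + 1) * Real.exp (t * u))
      ((1 - t) * u ^ 2 * Real.exp (t * u)) t := by
    have h := ((((hasDerivAt_id t).const_sub 1).mul_const u).add_const 1).mul
      ((hasDerivAt_id t).mul_const u).exp
    refine h.congr_deriv ?_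
    simp only [id]
    ring
  rw [intervalIntegral.integral_eq_sub_of_hasDerivAt (fun t _ ↦ hderiv t)
    (Continuous.intervalIntegrable (by fun_prop) _ _)]
  simp only [sub_self, zero_mul, zero_add, one_mul, sub_zero, Real.exp_zero, mul_one]
  ring

theorem exp_sub_one_sub_mul_sq_le {u v : ℝ} (huv : u ≤ v) :
    (Real.exp u - 1 - u) * v ^ 2 ≤ (Real.exp v - 1 - v) * u ^ 2 := by
  simp only [← integral_one_sub_mul_sq_mul_exp, ← intervalIntegral.integral_mul_const]
  refine intervalIntegral.integral_mono_on zero_le_one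
    (Continuous.intervalIntegrable (by fun_prop) _ _)
    (Continuous.intervalIntegrable (by fun_prop) _ _) fun t ⟨ht0, ht1⟩ ↦ ?_
  have hexp : Real.exp (t * u) ≤ Real.exp (t * v) := by gcongr
  calc (1 - t) * u ^ 2 * Real.exp (t * u) * v ^ 2
      = (1 - t) * (u * v) ^ 2 * Real.exp (t * u) := by ring
    _ ≤ (1 - t) * (u * v) ^ 2 * Real.exp (t * v) :=
        mul_le_mul_of_nonneg_left hexp (mul_nonneg (sub_nonneg.2 ht1) (sq_nonneg _))
    _ = (1 - t) * v ^ 2 * Real.exp (t * v) * u ^ 2 := by ring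

variable {M u : ℝ}

theorem one_add_exp_neg_mul_exp_sub_one_le_of_le (hM : 2 ≤ M) (hu : u ≤ M) :
    1 + Real.exp (-M) * (Real.exp u - 1) ≤ Real.exp (Real.exp (-M) * u + u ^ 2 / (2 + M)) := by
  have hcancel : Real.exp (-M) * Real.exp M = 1 := by rw [← Real.exp_add]; simp
  have hremainder : Real.exp (-M) * (Real.exp u - 1 - u) ≤ u ^ 2 / (2 + M) :=
    calc Real.exp (-M) * (Real.exp u - 1 - u)
        ≤ Real.exp (-M) * ((Real.exp M - 1 - M) * u ^ 2 / M ^ 2) := by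
          gcongr
          rw [le_div_iff₀ (by positivity)]
          exact exp_sub_one_sub_mul_sq_le hu
      _ = (1 - Real.exp (-M) * (1 + M)) * (u ^ 2 / M ^ 2) := by
          linear_combination u ^ 2 / M ^ 2 * hcancel
      _ ≤ 1 * (u ^ 2 / M ^ 2) := by
          gcongr
          exact sub_le_self _ (by positivity)
      _ ≤ u ^ 2 / (2 + M) := by
          rw [one_mul]
          gcongr
          nlinarith
  calc 1 + Real.exp (-M) * (Real.exp u - 1)
      ≤ Real.exp (-M) * u + u ^ 2 / (2 + M) + 1 := by linarith
    _ ≤ _ := Real.add_one_le_exp _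

theorem one_add_exp_neg_mul_exp_sub_one_le_of_ge (hM : 2 ≤ M) (hu : M ≤ u) :
    1 + Real.exp (-M) * (Real.exp u - 1) ≤ Real.exp (Real.exp (-M) * u + u ^ 2 / (2 + M)) := by
  have hsplit : Real.exp (u - M) = Real.exp (-M) * Real.exp u := by rw [← Real.exp_add]; ring_nf
  have hone : 1 ≤ Real.exp (u - M) := Real.one_le_exp (sub_nonneg.2 hu)
  -- As a quadratic in `u` this has discriminant `(2 + M) * (6 - 3 * M)`, hence `2 ≤ M`.
  have hquad : 1 + (u - M) ≤ u ^ 2 / (2 + M) := by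
    rw [le_div_iff₀ (by positivity)]
    nlinarith [sq_nonneg (2 * u - (2 + M))]
  calc 1 + Real.exp (-M) * (Real.exp u - 1)
      ≤ 2 * Real.exp (u - M) := by linarith [Real.exp_pos (-M)]
    _ ≤ Real.exp 1 * Real.exp (u - M) := by
        gcongr
        linarith [Real.add_one_le_exp 1]
    _ = Real.exp (1 + (u - M)) := (Real.exp_add _ _).symm
    _ ≤ Real.exp (Real.exp (-M) * u + u ^ 2 / (2 + M)) := by
        have hu0 : 0 ≤ u := zero_le_two.trans (hM.trans hu)
        refine Real.exp_le_exp.2 (hquad.trans (le_add_of_nonneg_left ?_))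
        positivity

theorem one_add_exp_neg_mul_exp_sub_one_le (hM : 2 ≤ M) (u : ℝ) :
    1 + Real.exp (-M) * (Real.exp u - 1) ≤ Real.exp (Real.exp (-M) * u + u ^ 2 / (2 + M)) :=
  (le_total u M).elim (one_add_exp_neg_mul_exp_sub_one_le_of_le hM)
    (one_add_exp_neg_mul_exp_sub_one_le_of_ge hM)

end RealBounds

section SubGaussian

variable {Ω : Type*} [MeasurableSpace Ω] {μ : Measure Ω}

theorem measureReal_abs_ge_le_of_hasSubgaussianMGF {X : Ω → ℝ} {c : NNReal}
    (hX : HasSubgaussianMGF X c μ) {r : ℝ} (hr : 0 ≤ r) :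
    μ.real {ω | r ≤ |X ω|} ≤ 2 * Real.exp (-r ^ 2 / (2 * c)) := by
  calc μ.real {ω | r ≤ |X ω|}
      = μ.real ({ω | r ≤ X ω} ∪ {ω | r ≤ (-X) ω}) := by
        simp only [le_abs, Set.ofPred_or, Pi.neg_apply]
    _ ≤ μ.real {ω | r ≤ X ω} + μ.real {ω | r ≤ (-X) ω} := measureReal_union_le _ _
    _ ≤ 2 * Real.exp (-r ^ 2 / (2 * c)) := by
        linarith [hX.measure_ge_le hr, hX.neg.measure_ge_le hr]

theorem mgf_indicator_one_sub_const [IsProbabilityMeasure μ] {A : Set Ω} (hA : MeasurableSet A)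
    (r t : ℝ) :
    mgf (fun ω ↦ A.indicator 1 ω - r) μ t =
      (1 + μ.real A * (Real.exp t - 1)) * Real.exp (-(t * r)) := by
  have hexp (ω : Ω) : Real.exp (t * (A.indicator 1 ω - r)) =
      (1 + A.indicator (1 : Ω → ℝ) ω * (Real.exp t - 1)) * Real.exp (-(t * r)) := by
    by_cases hω : ω ∈ A
    · rw [Set.indicator_of_mem hω, Pi.one_apply, one_mul, add_sub_cancel, ← Real.exp_add]
      ring_nf
    · simp [hω]
  have hint : Integrable (A.indicator (1 : Ω → ℝ)) μ := (integrable_const 1).indicator hA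
  simp only [mgf, hexp]
  rw [integral_mul_const, integral_add (integrable_const 1) (hint.mul_const _),
    integral_mul_const, integral_indicator_one hA]
  simp

theorem hasSubgaussianMGF_indicator_one_sub_quarter [IsProbabilityMeasure μ] {A : Set Ω}
    (hA : MeasurableSet A) :
    HasSubgaussianMGF (fun ω ↦ A.indicator 1 ω - μ.real A) (1 / 4) μ := by
  have hmem (ω : Ω) : A.indicator (1 : Ω → ℝ) ω ∈ Set.Icc 0 1 :=
    ⟨Set.indicator_nonneg (fun _ _ ↦ zero_le_one) ω,
      Set.indicator_le_self' (fun _ _ ↦ zero_le_one) ω⟩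
  have hproxy : (‖(1 : ℝ) - 0‖₊ / 2) ^ 2 = 1 / 4 := by
    rw [sub_zero, nnnorm_one]
    norm_num
  have hhoeffding := hasSubgaussianMGF_of_mem_Icc (μ := μ)
    (measurable_one.indicator hA).aemeasurable (.of_forall hmem)
  rwa [integral_indicator_one hA, hproxy] at hhoeffding

theorem hasSubgaussianMGF_indicator_one_sub [IsProbabilityMeasure μ] {A : Set Ω}
    (hA : MeasurableSet A) (hpos : 0 < μ.real A) :
    HasSubgaussianMGF (fun ω ↦ A.indicator 1 ω - μ.real A)
      (2 / (2 - Real.log (μ.real A))).toNNReal μ := by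
  set p := μ.real A with hp
  set M := -Real.log p with hM
  have hM0 : 0 ≤ M := neg_nonneg.2 (Real.log_nonpos measureReal_nonneg measureReal_le_one)
  have hpM : p = Real.exp (-M) := by rw [hM, neg_neg, Real.exp_log hpos]
  have hhoeffding := hasSubgaussianMGF_indicator_one_sub_quarter (μ := μ) hA
  refine ⟨hhoeffding.integrable_exp_mul, fun t ↦ ?_⟩
  have hvar : ((2 / (2 - Real.log p)).toNNReal : ℝ) * t ^ 2 / 2 = t ^ 2 / (2 + M) := by
    rw [Real.coe_toNNReal _ (by rw [sub_eq_add_neg]; positivity), hM]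
    ring
  rw [hvar]
  rcases le_total M 2 with hM2 | hM2
  · refine (hhoeffding.mgf_le t).trans (Real.exp_le_exp.2 ?_)
    rw [NNReal.coe_div, NNReal.coe_one, NNReal.coe_ofNat, le_div_iff₀ (by positivity)]
    nlinarith [sq_nonneg t]
  · rw [mgf_indicator_one_sub_const hA, ← hp, hpM]
    calc (1 + Real.exp (-M) * (Real.exp t - 1)) * Real.exp (-(t * Real.exp (-M)))
        ≤ Real.exp (Real.exp (-M) * t + t ^ 2 / (2 + M)) * Real.exp (-(t * Real.exp (-M))) := by
          gcongr
          exact one_add_exp_neg_mul_exp_sub_one_le hM2 t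
      _ = Real.exp (t ^ 2 / (2 + M)) := by
          rw [← Real.exp_add]
          ring_nf

theorem measureReal_abs_sum_indicator_one_sub_ge_le {ι : Type*} [Fintype ι] [Nonempty ι]
    {A : ι → Set Ω} (hA : ∀ i, MeasurableSet (A i)) (hindep : iIndepSet A μ) {p : ℝ}
    (hpos : 0 < p) (hp : ∀ i, μ.real (A i) = p) {r : ℝ} (hr : 0 ≤ r) :
    μ.real {ω | r ≤ |∑ i, ((A i).indicator 1 ω - p)|} ≤
      2 * Real.exp (-(r ^ 2 * (2 - Real.log p)) / (4 * Fintype.card ι)) := by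
  have := hindep.isProbabilityMeasure
  have hlog : Real.log p ≤ 0 :=
    Real.log_nonpos hpos.le (hp (Classical.arbitrary ι) ▸ measureReal_le_one)
  have hcenter : iIndepFun (fun i ω ↦ (A i).indicator (1 : Ω → ℝ) ω - p) μ :=
    hindep.iIndepFun_indicator.comp (fun _ x ↦ x - p) fun _ ↦ measurable_id.sub_const p
  have hsub (i : ι) : HasSubgaussianMGF (fun ω ↦ (A i).indicator (1 : Ω → ℝ) ω - p)
      (2 / (2 - Real.log p)).toNNReal μ := by
    simpa only [hp i] using hasSubgaussianMGF_indicator_one_sub (hA i) (hpos.trans_eq (hp i).symm)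
  have hproxy : -r ^ 2 / (2 * ((∑ _i : ι, (2 / (2 - Real.log p)).toNNReal : NNReal) : ℝ)) =
      -(r ^ 2 * (2 - Real.log p)) / (4 * Fintype.card ι) := by
    have hpos' : 0 < 2 - Real.log p := by linarith
    rw [sum_const, card_univ, NNReal.coe_nsmul, nsmul_eq_mul, Real.coe_toNNReal _ (by positivity)]
    field_simp
    norm_num
  rw [← hproxy]
  exact measureReal_abs_ge_le_of_hasSubgaussianMGF
    (HasSubgaussianMGF.sum_of_iIndepFun hcenter fun i _ ↦ hsub i) hr

theorem measureReal_abs_frequency_sub_ge_le_exp {ι : Type*} [Fintype ι] [Nonempty ι]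
    {A : ι → Set Ω} (hA : ∀ i, MeasurableSet (A i)) (hindep : iIndepSet A μ) {p : ℝ}
    (hpos : 0 < p) (hp : ∀ i, μ.real (A i) = p) {a : ℝ} (ha : 0 ≤ a) :
    μ.real {ω | a ≤ |(∑ i, (A i).indicator 1 ω) / Fintype.card ι - p|} ≤
      2 * Real.exp (-(Fintype.card ι * a ^ 2 * (2 - Real.log p)) / 4) := by
  have hk : (0 : ℝ) < Fintype.card ι := Nat.cast_pos.2 Fintype.card_pos
  have hdev (ω : Ω) : a ≤ |(∑ i, (A i).indicator 1 ω) / Fintype.card ι - p| ↔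
      Fintype.card ι * a ≤ |∑ i, ((A i).indicator 1 ω - p)| := by
    have hsum : ∑ i, ((A i).indicator 1 ω - p) =
        Fintype.card ι * ((∑ i, (A i).indicator 1 ω) / Fintype.card ι - p) := by
      rw [sum_sub_distrib, sum_const, card_univ, nsmul_eq_mul]
      field_simp
    rw [hsum, abs_mul, abs_of_pos hk, mul_le_mul_iff_right₀ hk]
  have hexponent : -(Fintype.card ι * a ^ 2 * (2 - Real.log p)) / 4 =
      -((Fintype.card ι * a) ^ 2 * (2 - Real.log p)) / (4 * Fintype.card ι) := by
    field_simp
  simp only [hdev, hexponent]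
  exact measureReal_abs_sum_indicator_one_sub_ge_le hA hindep hpos hp (by positivity)

theorem measureReal_abs_frequency_sub_ge_le_exp_mul {ι : Type*} [Fintype ι] {A : ι → Set Ω}
    (hA : ∀ i, MeasurableSet (A i)) (hindep : iIndepSet A μ) {p : ℝ}
    (hp : ∀ i, μ.real (A i) = p) {a L : ℝ} (ha : 0 < a) (hL : 2 ≤ L)
    (hcard : 2 * L ≤ Fintype.card ι * a ^ 2) :
    μ.real {ω | a ≤ |(∑ i, (A i).indicator 1 ω) / Fintype.card ι - p|} ≤
      2 * Real.exp (-L) * p := by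
  have := hindep.isProbabilityMeasure
  have hk : (0 : ℝ) < Fintype.card ι := pos_of_mul_pos_left (by linarith) (sq_nonneg a)
  have : Nonempty ι := Fintype.card_pos_iff.1 (Nat.cast_pos.1 hk)
  have hp0 : 0 ≤ p := hp (Classical.arbitrary ι) ▸ measureReal_nonneg
  have hp1 : p ≤ 1 := hp (Classical.arbitrary ι) ▸ measureReal_le_one
  rcases hp0.eq_or_lt with rfl | hpos
  · have hnull : ∀ᵐ ω ∂μ, ∀ i, ω ∉ A i := ae_all_iff.2 fun i ↦
      measure_eq_zero_iff_ae_notMem.1 ((measureReal_eq_zero_iff).1 (hp i))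
    rw [mul_zero]
    refine ((measureReal_eq_zero_iff).2 (measure_eq_zero_iff_ae_notMem.2 ?_)).le
    filter_upwards [hnull] with ω hω
    simp [hω, ha]
  have hlog : Real.log p ≤ 0 := Real.log_nonpos hp0 hp1
  have hexponent : -(Fintype.card ι * a ^ 2 * (2 - Real.log p)) / 4 ≤ -L + Real.log p :=
    calc -(Fintype.card ι * a ^ 2 * (2 - Real.log p)) / 4
        ≤ -(2 * L * (2 - Real.log p)) / 4 := by
          gcongr
          linarith
      _ ≤ -L + Real.log p := by nlinarith
  calc μ.real {ω | a ≤ |(∑ i, (A i).indicator 1 ω) / Fintype.card ι - p|}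
      ≤ 2 * Real.exp (-(Fintype.card ι * a ^ 2 * (2 - Real.log p)) / 4) :=
        measureReal_abs_frequency_sub_ge_le_exp hA hindep hpos hp ha.le
    _ ≤ 2 * Real.exp (-L + Real.log p) := by gcongr
    _ = 2 * Real.exp (-L) * p := by rw [Real.exp_add, Real.exp_log hpos, mul_assoc]

end SubGaussian

section Pi

variable {ι Θ : Type*} [Fintype ι] [MeasurableSpace Θ]

theorem measureReal_pi_coe_finset [MeasurableSingletonClass Θ] (μ : ι → Measure Θ)
    [∀ i, SigmaFinite (μ i)] (S : Finset (ι → Θ)) :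
    (Measure.pi μ).real S = ∑ s ∈ S, ∏ i, (μ i).real {s i} := by
  rw [← sum_measureReal_singleton]
  simp only [measureReal_def, Measure.pi_singleton, ENNReal.toReal_prod]

theorem iIndepSet_eval_preimage (μ : ι → Measure Θ) [∀ i, IsProbabilityMeasure (μ i)]
    {A : ι → Set Θ} (hA : ∀ i, MeasurableSet (A i)) :
    iIndepSet (fun i ↦ Function.eval i ⁻¹' A i) (Measure.pi μ) :=
  (iIndepSet_iff_meas_biInter fun i ↦ measurable_pi_apply i (hA i)).2 fun T ↦
    (iIndepFun_pi (X := fun _ ↦ id) fun _ ↦ aemeasurable_id).measure_inter_preimage_eq_mul T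
      fun i _ ↦ hA i

theorem exists_isProbabilityMeasure_real_singleton [Fintype Θ] [MeasurableSingletonClass Θ]
    {p : Θ → ℝ} (hp0 : ∀ θ, 0 ≤ p θ) (hp1 : ∑ θ, p θ = 1) :
    ∃ μ : Measure Θ, IsProbabilityMeasure μ ∧ ∀ θ, μ.real {θ} = p θ := by
  have hsum : ∑ θ, ENNReal.ofReal (p θ) = 1 := by
    rw [← ENNReal.ofReal_sum_of_nonneg fun θ _ ↦ hp0 θ, hp1, ENNReal.ofReal_one]
  refine ⟨(PMF.ofFintype _ hsum).toMeasure, inferInstance, fun θ ↦ ?_⟩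
  rw [measureReal_def, PMF.toMeasure_apply_singleton _ _ (measurableSet_singleton θ),
    PMF.ofFintype_apply, ENNReal.toReal_ofReal (hp0 θ)]

end Pi

section Empirical

variable {Θ : Type*} [Fintype Θ] [DecidableEq Θ]

theorem sum_prod_abs_empDist_sub_ge_le {k : ℕ} {p : Θ → ℝ} (hp0 : ∀ θ, 0 ≤ p θ)
    (hp1 : ∑ θ, p θ = 1) (θ : Θ) {a L : ℝ} (ha : 0 < a) (hL : 2 ≤ L) (hk : 2 * L ≤ k * a ^ 2) :
    ∑ s with a ≤ |empDist (k := k) s θ - p θ|, ∏ t, p (s t) ≤ 2 * Real.exp (-L) * p θ := by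
  let _ : MeasurableSpace Θ := ⊤
  obtain ⟨μ, _, hμ⟩ := exists_isProbabilityMeasure_real_singleton hp0 hp1
  let A (t : Fin k) : Set (Fin k → Θ) := Function.eval t ⁻¹' {θ}
  have hA (t : Fin k) : MeasurableSet (A t) := measurable_pi_apply t (measurableSet_singleton θ)
  have hindep : iIndepSet A (Measure.pi fun _ ↦ μ) :=
    iIndepSet_eval_preimage _ fun _ ↦ measurableSet_singleton θ
  have hprob (t : Fin k) : (Measure.pi fun _ ↦ μ).real (A t) = p θ := by
    rw [(measurePreserving_eval _ t).measureReal_preimage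
      (measurableSet_singleton θ).nullMeasurableSet, hμ]
  have hfreq (s : Fin k → Θ) : empDist s θ = (∑ t, (A t).indicator 1 s) / Fintype.card (Fin k) := by
    simp [empDist, A, Set.indicator]
  calc ∑ s with a ≤ |empDist (k := k) s θ - p θ|, ∏ t, p (s t)
      = (Measure.pi fun _ ↦ μ).real
          {s | a ≤ |(∑ t, (A t).indicator 1 s) / Fintype.card (Fin k) - p θ|} := by
        simp only [← hμ, ← measureReal_pi_coe_finset, coe_filter, mem_univ, true_and, hfreq]
    _ ≤ 2 * Real.exp (-L) * p θ :=
        measureReal_abs_frequency_sub_ge_le_exp_mul hA hindep hprob ha hL (by simpa using hk)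

theorem bicriteria_2_general {nbar ϱ ε δ : ℝ} (hnϱ : 2 ≤ nbar * ϱ) (hε : 0 < ε) (hδ0 : 0 < δ)
    (hδ1 : δ ≤ 1) {k : ℕ} (hk : 32 * Real.log (4 * nbar * ϱ / δ) / ε ^ 2 ≤ k)
    {p : Θ → ℝ} (hp0 : ∀ θ, 0 ≤ p θ) (hp1 : ∑ θ, p θ = 1) (θ : Θ) :
    ∑ s with ε / 4 ≤ |empDist (k := k) s θ - p θ|, ∏ t, p (s t) ≤ δ / 2 * p θ := by
  set L := Real.log (4 * nbar * ϱ / δ) with hLdef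
  have hratio : 8 ≤ 4 * nbar * ϱ / δ := by
    rw [le_div_iff₀ hδ0]
    linarith
  have hL : 2 ≤ L := by
    have hlog : Real.log 8 = 3 * Real.log 2 := by
      rw [show (8 : ℝ) = 2 ^ 3 by norm_num, Real.log_pow, Nat.cast_ofNat]
    linarith [Real.log_le_log (by norm_num) hratio, Real.log_two_gt_d9]
  have hexp : Real.exp (-L) ≤ δ / 8 := by
    rw [Real.exp_neg, hLdef, Real.exp_log (by linarith), inv_div]
    gcongr
    linarith
  have hkL : 2 * L ≤ k * (ε / 4) ^ 2 := by
    rw [div_le_iff₀ (by positivity)] at hk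
    linarith
  calc ∑ s with ε / 4 ≤ |empDist (k := k) s θ - p θ|, ∏ t, p (s t)
      ≤ 2 * Real.exp (-L) * p θ :=
        sum_prod_abs_empDist_sub_ge_le hp0 hp1 θ (by positivity) hL hkL
    _ ≤ δ / 2 * p θ := mul_le_mul_of_nonneg_right (by linarith) (hp0 θ)

end Empirical

/-- Lemma 12, `lemma:bicriteria_2`.
Let `γ̃` be the empirical distribution of `k` i.i.d. samples from `pstar`, where
`k = ⌈32·ln(4 n̄ ϱ/δ)/ε²⌉` with `n̄, ϱ ≥ 2`, `0 < ε ≤ 1` and `0 < δ ≤ 1`.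
Then for every state `θ`, `Pr(|γ̃_θ − pstar θ| ≥ ε/4) ≤ (δ/2)·pstar θ`.
The probability is expressed as the sum of the product weights `∏ t, pstar (s t)`
over sample vectors `s : Fin k → Θ` realizing the event. -/
theorem bicriteria_2
    (nbar ϱ : ℕ) (hn2 : 2 ≤ nbar) (hϱ2 : 2 ≤ ϱ)
    (ε δ : ℝ) (hε0 : 0 < ε) (hε1 : ε ≤ 1) (hδ0 : 0 < δ) (hδ1 : δ ≤ 1)
    (k : ℕ) (hk : k = ⌈32 * Real.log (4 * nbar * ϱ / δ) / ε ^ 2⌉₊)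
    {Θ : Type*} [Fintype Θ] [DecidableEq Θ] [Nonempty Θ]
    (pstar : Θ → ℝ) (hp0 : ∀ θ, 0 ≤ pstar θ) (hp1 : ∑ θ, pstar θ = 1)
    (θ : Θ) :
    ∑ s ∈ Finset.univ.filter (fun s : Fin k → Θ => ε / 4 ≤ |empDist s θ - pstar θ|),
        ∏ t, pstar (s t) ≤ δ / 2 * pstar θ := by
  have hnϱ : (2 : ℝ) ≤ nbar * ϱ := by exact_mod_cast hn2.trans (Nat.le_mul_of_pos_right _ (by lia))
  exact bicriteria_2_general hnϱ hε0 hδ0 hδ1 (hk ▸ Nat.le_ceil _) hp0 hp1 θ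
end
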